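/- arXiv:2211.01306 — 6 statements merged into one kernel-verified Lean document; each statement's English description precedes it below -/
import Mathlib

section
/- The inverse Schlömilch density is correctly normalized; equivalently, for every integer K ≥ 2, every τ > 0, every vector α ∈ ℝ^K with all α_i > 0, and every vector β ∈ ℝ^K with all β_i > 0, the integral over the simplex ∫_{S_K} (∑_{j=1}^K β_j/x_j^τ)^{−α_+} ∏_{i=1}^K x_i^{−(τ α_i + 1)} d^{K−1}x equals (1/(τ^{K−1} Γ(α_+))) ∏_{i=1}^K Γ(α_i)/β_i^{α_i}, where α_+ = ∑_{i=1}^K α_i and Γ is the Gamma function. -/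
open MeasureTheory Finset

/-- The fill map: from the `K-1` free coordinates to a point of `ℝ^K`,
with fill-up value `x_K = 1 - ∑_{i<K-1} x_i`. -/
noncomputable def fillMap (K : ℕ) (u : Fin (K - 1) → ℝ) : Fin K → ℝ :=
  fun i => if h : (i : ℕ) < K - 1 then u ⟨i, h⟩ else 1 - ∑ j, u j

/-- The `(K-1)`-dimensional Lebesgue measure on the probability simplex `S_K`,
obtained by pushing forward Lebesgue measure on the coordinate domain
`{u : u_j ≥ 0, ∑ u_j ≤ 1}` through the fill map. -/
noncomputable def simplexMeasure (K : ℕ) : Measure (Fin K → ℝ) :=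
  Measure.map (fillMap K)
    (volume.restrict {u : Fin (K - 1) → ℝ | (∀ j, 0 ≤ u j) ∧ ∑ j, u j ≤ 1})

noncomputable def gker (τ a b t : ℝ) : ℝ :=
  (Set.Ioi (0:ℝ)).indicator (fun t => t ^ (-(τ * a + 1)) * Real.exp (-(b * t ^ (-τ)))) t

lemma gker_nonneg (τ a b t : ℝ) : 0 ≤ gker τ a b t := by
  unfold gker
  apply Set.indicator_nonneg
  intro x hx
  have : (0:ℝ) < x := hx
  positivity

lemma gker_measurable (τ a b : ℝ) : Measurable (gker τ a b) := by
  unfold gker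
  apply Measurable.indicator _ measurableSet_Ioi
  fun_prop

lemma ker_aux {τ a b : ℝ} (hτ : 0 < τ) (ha : 0 < a) (hb : 0 < b) :
    IntegrableOn (fun t : ℝ => t ^ (-(τ * a + 1)) * Real.exp (-(b * t ^ (-τ)))) (Set.Ioi 0) ∧
    ∫ t in Set.Ioi (0:ℝ), t ^ (-(τ * a + 1)) * Real.exp (-(b * t ^ (-τ)))
      = Real.Gamma a / (τ * b ^ a) := by
  have hp : -τ ≠ 0 := by linarith
  have key : ∀ t ∈ Set.Ioi (0:ℝ), (|-τ| * t ^ (-τ - 1)) •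
      ((t ^ (-τ)) ^ (a - 1) * Real.exp (-(b * t ^ (-τ)))) =
      τ * (t ^ (-(τ * a + 1)) * Real.exp (-(b * t ^ (-τ)))) := by
    intro t ht
    have ht' : (0:ℝ) < t := ht
    rw [abs_neg, abs_of_pos hτ, ← Real.rpow_mul ht'.le, smul_eq_mul]
    have : t ^ (-(τ * a + 1)) = t ^ (-τ - 1) * t ^ (-τ * (a - 1)) := by
      rw [← Real.rpow_add ht']; congr 1; ring
    rw [this]; ring
  have hint : IntegrableOn (fun y : ℝ => y ^ (a - 1) * Real.exp (-(b * y))) (Set.Ioi 0) := by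
    have := integrableOn_rpow_mul_exp_neg_mul_rpow (p := 1) (s := a - 1) (b := b)
      (by linarith) one_pos hb
    simpa using this
  constructor
  · have h1 := (integrableOn_Ioi_comp_rpow_iff
      (fun y : ℝ => y ^ (a - 1) * Real.exp (-(b * y))) hp).2 hint
    have h2 := (integrableOn_congr_fun key measurableSet_Ioi).1 h1
    have h3 := h2.const_mul τ⁻¹
    refine (integrableOn_congr_fun ?_ measurableSet_Ioi).1 h3
    intro t _
    simp only
    rw [← mul_assoc, inv_mul_cancel₀ hτ.ne', one_mul]
  · have h1 := integral_comp_rpow_Ioi (fun y : ℝ => y ^ (a - 1) * Real.exp (-(b * y))) hp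
    rw [setIntegral_congr_fun measurableSet_Ioi key, integral_const_mul,
      Real.integral_rpow_mul_exp_neg_mul_Ioi ha hb] at h1
    rw [eq_div_iff (by positivity)]
    have : (1 / b) ^ a = 1 / b ^ a := by
      rw [Real.div_rpow zero_le_one hb.le, Real.one_rpow]
    rw [this] at h1
    have hba : 0 < b ^ a := by positivity
    field_simp at h1
    linarith

lemma gker_integrable {τ a b : ℝ} (hτ : 0 < τ) (ha : 0 < a) (hb : 0 < b) :
    Integrable (gker τ a b) :=
  (integrable_indicator_iff measurableSet_Ioi).2 (ker_aux hτ ha hb).1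

lemma gker_integral {τ a b : ℝ} (hτ : 0 < τ) (ha : 0 < a) (hb : 0 < b) :
    ∫ t, gker τ a b t = Real.Gamma a / (τ * b ^ a) := by
  rw [← (ker_aux hτ ha hb).2, ← integral_indicator measurableSet_Ioi]
  rfl

lemma lint_ker {τ a b : ℝ} (hτ : 0 < τ) (ha : 0 < a) (hb : 0 < b) :
    ∫⁻ t in Set.Ioi (0:ℝ), ENNReal.ofReal (t ^ (-(τ * a + 1)) * Real.exp (-(b * t ^ (-τ))))
      = ENNReal.ofReal (Real.Gamma a / (τ * b ^ a)) := by
  rw [← (ker_aux hτ ha hb).2, ofReal_integral_eq_lintegral_ofReal (ker_aux hτ ha hb).1]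
  filter_upwards [ae_restrict_mem measurableSet_Ioi] with t ht
  have : (0:ℝ) < t := ht
  simp only [Pi.zero_apply]
  positivity

lemma lint_prod {n : ℕ} {τ : ℝ} (hτ : 0 < τ) (α β : Fin n → ℝ)
    (hα : ∀ i, 0 < α i) (hβ : ∀ i, 0 < β i) :
    ∫⁻ z : Fin n → ℝ, ENNReal.ofReal (∏ i, gker τ (α i) (β i) (z i))
      = ENNReal.ofReal (∏ i, Real.Gamma (α i) / (τ * β i ^ α i)) := by
  rw [← ofReal_integral_eq_lintegral_ofReal]
  · rw [integral_fintype_prod_volume_eq_prod]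
    simp_rw [gker_integral hτ (hα _) (hβ _)]
  · exact Integrable.fintype_prod (fun i => gker_integrable hτ (hα i) (hβ i))
  · exact Filter.Eventually.of_forall fun z => Finset.prod_nonneg fun i _ => gker_nonneg _ _ _ _

lemma fillMap_measurable (K : ℕ) : Measurable (fillMap K) := by
  refine measurable_pi_iff.2 fun i => ?_
  unfold fillMap
  by_cases h : (i : ℕ) < K - 1
  · simp only [h, dite_true]; fun_prop
  · simp only [h, dite_false]; fun_prop

lemma fillMap_castSucc (n : ℕ) (u : Fin n → ℝ) (i : Fin n) :
    fillMap (n + 1) u i.castSucc = u i := by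
  simp [fillMap]

lemma fillMap_last (n : ℕ) (u : Fin n → ℝ) :
    fillMap (n + 1) u (Fin.last n) = 1 - ∑ j, u j := by
  simp [fillMap]

lemma polar {n : ℕ} (G : (Fin (n + 1) → ℝ) → ENNReal) (hG : Measurable G)
    (h0 : ∀ z, ∑ i, z i ≤ 0 → G z = 0) :
    ∫⁻ z, G z = ∫⁻ u : Fin n → ℝ, ∫⁻ s in Set.Ioi (0:ℝ),
      ENNReal.ofReal (s ^ n) * G (s • fillMap (n + 1) u) := by
  let e := MeasurableEquiv.piFinSuccAbove (fun _ : Fin (n + 1) => ℝ) (Fin.last n)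
  have he : MeasurePreserving e.symm (volume.prod volume) volume :=
    (volume_preserving_piFinSuccAbove (fun _ : Fin (n + 1) => ℝ) (Fin.last n)).symm
  have hes : ∀ p, (∑ i, e.symm p i) = (∑ i, p.2 i) + p.1 := by
    intro p
    rw [Fin.sum_univ_castSucc]
    simp [e, MeasurableEquiv.piFinSuccAbove]
  have hm : Measurable (fun p => G (e.symm p)) := hG.comp e.symm.measurable
  rw [← he.lintegral_comp hG, lintegral_prod_symm' _ hm]
  have h1 : ∀ u : Fin n → ℝ, ∫⁻ t, G (e.symm (t, u)) = ∫⁻ s, G (e.symm (s - ∑ j, u j, u)) :=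
    fun u => (lintegral_sub_right_eq_self (fun t => G (e.symm (t, u))) _).symm
  refine (lintegral_congr h1).trans ?_
  have hm2 : Measurable (fun p : (Fin n → ℝ) × ℝ => G (e.symm (p.2 - ∑ j, p.1 j, p.1))) := by
    refine hm.comp (Measurable.prodMk ?_ ?_) <;> fun_prop
  rw [lintegral_lintegral_swap hm2.aemeasurable]
  have hm3 : Measurable (fun p : (Fin n → ℝ) × ℝ =>
      ENNReal.ofReal (p.2 ^ n) * G (p.2 • fillMap (n + 1) p.1)) := by
    refine Measurable.mul (by fun_prop) (hG.comp ?_)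
    exact measurable_snd.smul ((fillMap_measurable _).comp measurable_fst)
  rw [lintegral_lintegral_swap (μ := volume) (ν := volume.restrict (Set.Ioi (0:ℝ)))
    hm3.aemeasurable]
  rw [← lintegral_indicator measurableSet_Ioi]
  refine lintegral_congr fun s => ?_
  by_cases hs : 0 < s
  · rw [Set.indicator_of_mem (by exact hs)]
    have hsm : Measurable (fun u : Fin n → ℝ => G (e.symm (s - ∑ j, u j, u))) :=
      hm2.comp (measurable_id.prodMk measurable_const)
    rw [lintegral_const_mul' _ _ ENNReal.ofReal_ne_top]
    have hfill : ∀ u : Fin n → ℝ, s • fillMap (n + 1) u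
        = e.symm (s - ∑ j, (s • u) j, s • u) := by
      intro u
      ext i
      refine Fin.lastCases ?_ (fun i => ?_) i
      · simp [fillMap_last, e, MeasurableEquiv.piFinSuccAbove, mul_sub, Finset.mul_sum]
      · simp [fillMap_castSucc, e, MeasurableEquiv.piFinSuccAbove]
    simp_rw [hfill]
    have := lintegral_map (μ := (volume : Measure (Fin n → ℝ))) hsm (measurable_const_smul s)
    rw [← this, Measure.map_addHaar_smul _ hs.ne', lintegral_smul_measure, smul_eq_mul,
      ← mul_assoc, ← ENNReal.ofReal_mul (by positivity)]
    have hsn : 0 < s ^ n := by positivity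
    simp [abs_of_pos hsn, hsn.ne']
  · rw [Set.indicator_of_notMem (by simpa using hs)]
    have : ∀ u : Fin n → ℝ, G (e.symm (s - ∑ j, u j, u)) = 0 := by
      intro u
      apply h0
      rw [hes]
      simp only [not_lt] at hs
      simpa using hs
    simp [this]

lemma inner_int {n : ℕ} {τ : ℝ} (hτ : 0 < τ) (α β : Fin (n + 1) → ℝ)
    (hα : ∀ i, 0 < α i) (hβ : ∀ i, 0 < β i) (x : Fin (n + 1) → ℝ) (hx : ∀ i, 0 < x i) :
    ∫⁻ s in Set.Ioi (0:ℝ), ENNReal.ofReal (s ^ n) *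
      ENNReal.ofReal (∏ i, gker τ (α i) (β i) ((s • x) i))
    = ENNReal.ofReal (Real.Gamma (∑ i, α i) / τ) * ENNReal.ofReal
      ((∑ j, β j / x j ^ τ) ^ (-(∑ i, α i)) * ∏ i, x i ^ (-(τ * α i + 1))) := by
  have hA : 0 < ∑ i, α i := Finset.sum_pos (fun i _ => hα i) Finset.univ_nonempty
  have hB : 0 < ∑ j, β j / x j ^ τ := by
    refine Finset.sum_pos (fun i _ => ?_) Finset.univ_nonempty
    have := hβ i; have := hx i; positivity
  have hP : 0 ≤ ∏ i, x i ^ (-(τ * α i + 1)) :=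
    Finset.prod_nonneg fun i _ => (Real.rpow_pos_of_pos (hx i) _).le
  have key : ∀ s ∈ Set.Ioi (0:ℝ), ENNReal.ofReal (s ^ n) *
      ENNReal.ofReal (∏ i, gker τ (α i) (β i) ((s • x) i)) =
      ENNReal.ofReal (∏ i, x i ^ (-(τ * α i + 1))) *
      ENNReal.ofReal (s ^ (-(τ * (∑ i, α i) + 1)) *
        Real.exp (-((∑ j, β j / x j ^ τ) * s ^ (-τ)))) := by
    intro s hs
    have hs' : (0:ℝ) < s := hs
    rw [← ENNReal.ofReal_mul (by positivity), ← ENNReal.ofReal_mul hP]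
    congr 1
    have h1 : ∀ i, gker τ (α i) (β i) ((s • x) i) =
        x i ^ (-(τ * α i + 1)) * s ^ (-(τ * α i + 1)) *
          Real.exp (-(β i / x i ^ τ * s ^ (-τ))) := by
      intro i
      have hxi := hx i
      have : 0 < s * x i := by positivity
      rw [gker, Pi.smul_apply, smul_eq_mul, Set.indicator_of_mem (by exact this),
        Real.mul_rpow hs'.le hxi.le, Real.mul_rpow hs'.le hxi.le, Real.rpow_neg hxi.le τ]
      rw [mul_comm (s ^ (-(τ * α i + 1)))]
      congr 3
      ring
    simp_rw [h1]
    rw [Finset.prod_mul_distrib, Finset.prod_mul_distrib, ← Real.exp_sum,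
      ← Real.rpow_sum_of_pos hs', Finset.sum_neg_distrib, Finset.sum_neg_distrib,
      ← Finset.sum_mul, Finset.sum_add_distrib, ← Finset.mul_sum]
    have h2 : s ^ (-(τ * (∑ i, α i) + 1)) =
        s ^ n * s ^ (-(τ * (∑ i, α i) + ∑ i : Fin (n + 1), (1:ℝ))) := by
      rw [← Real.rpow_natCast s n, ← Real.rpow_add hs']
      congr 1
      simp
      ring
    rw [h2]
    ring
  rw [setLIntegral_congr_fun measurableSet_Ioi key, lintegral_const_mul' _ _ ENNReal.ofReal_ne_top,
    lint_ker hτ hA hB, ← ENNReal.ofReal_mul hP, ← ENNReal.ofReal_mul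
      (by have := Real.Gamma_pos_of_pos hA; positivity)]
  congr 1
  rw [Real.rpow_neg hB.le]
  have := Real.rpow_pos_of_pos hB (∑ i, α i)
  field_simp

/-- Normalization of the inverse Schlömilch density. -/
theorem inverse_schlomilch_normalization
    (K : ℕ) (hK : 2 ≤ K) (τ : ℝ) (hτ : 0 < τ)
    (α β : Fin K → ℝ) (hα : ∀ i, 0 < α i) (hβ : ∀ i, 0 < β i) :
    ∫ x, (∑ j, β j / x j ^ τ) ^ (-(∑ i, α i)) * ∏ i, x i ^ (-(τ * α i + 1))
        ∂(simplexMeasure K)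
      = (1 / (τ ^ (K - 1) * Real.Gamma (∑ i, α i))) *
          ∏ i, Real.Gamma (α i) / β i ^ (α i) := by
  obtain ⟨n, rfl⟩ : ∃ n, K = n + 1 := ⟨K - 1, by omega⟩
  have hA : 0 < ∑ i, α i := Finset.sum_pos (fun i _ => hα i) Finset.univ_nonempty
  have hGA := Real.Gamma_pos_of_pos hA
  set F : (Fin (n + 1) → ℝ) → ℝ := fun x =>
    (∑ j, β j / x j ^ τ) ^ (-(∑ i, α i)) * ∏ i, x i ^ (-(τ * α i + 1)) with hF
  have hFm : Measurable F := by
    rw [hF]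
    fun_prop
  set D : Set (Fin n → ℝ) := {u | (∀ j, 0 ≤ u j) ∧ ∑ j, u j ≤ 1} with hD
  have hDm : MeasurableSet D := by
    have hDe : D = (⋂ j, {u : Fin n → ℝ | 0 ≤ u j}) ∩ {u : Fin n → ℝ | ∑ j, u j ≤ 1} := by
      ext u
      simp [hD]
    rw [hDe]
    exact (MeasurableSet.iInter fun j =>
      measurableSet_le measurable_const (measurable_pi_apply j)).inter
      (measurableSet_le (Finset.measurable_fun_sum _ fun j _ => measurable_pi_apply j)
        measurable_const)
  have hDfill : ∀ u, u ∈ D ↔ ∀ i, 0 ≤ fillMap (n + 1) u i := by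
    intro u
    rw [Fin.forall_fin_succ']
    simp [hD, fillMap_castSucc, fillMap_last]
  have hF0 : ∀ u ∈ D, 0 ≤ F (fillMap (n + 1) u) := by
    intro u hu
    rw [hDfill] at hu
    refine mul_nonneg (Real.rpow_nonneg (Finset.sum_nonneg fun j _ => ?_) _)
      (Finset.prod_nonneg fun j _ => Real.rpow_nonneg (hu j) _)
    exact div_nonneg (hβ j).le (Real.rpow_nonneg (hu j) _)
  have hmain : ENNReal.ofReal (∏ i, Real.Gamma (α i) / (τ * β i ^ α i)) =
      ENNReal.ofReal (Real.Gamma (∑ i, α i) / τ) *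
        ∫⁻ u in D, ENNReal.ofReal (F (fillMap (n + 1) u)) := by
    rw [← lint_prod hτ α β hα hβ, polar]
    · rw [← lintegral_const_mul' _ _ ENNReal.ofReal_ne_top, ← lintegral_indicator hDm]
      refine lintegral_congr fun u => ?_
      by_cases hpos : ∀ i, 0 < fillMap (n + 1) u i
      · rw [inner_int hτ α β hα hβ _ hpos, Set.indicator_of_mem]
        rw [hDfill]
        exact fun i => (hpos i).le
      · push Not at hpos
        obtain ⟨i, hi⟩ := hpos
        have hR : D.indicator (fun u => ENNReal.ofReal (Real.Gamma (∑ i, α i) / τ) *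
            ENNReal.ofReal (F (fillMap (n + 1) u))) u = 0 := by
          by_cases hu : u ∈ D
          · rw [Set.indicator_of_mem hu]
            have hz : fillMap (n + 1) u i = 0 := le_antisymm hi ((hDfill u).1 hu i)
            have : F (fillMap (n + 1) u) = 0 := by
              rw [hF]
              refine mul_eq_zero_of_right _ (Finset.prod_eq_zero (Finset.mem_univ i) ?_)
              rw [hz, Real.zero_rpow]
              have := mul_pos hτ (hα i)
              linarith
            simp [this]
          · rw [Set.indicator_of_notMem hu]
        rw [hR]
        refine setLIntegral_eq_zero measurableSet_Ioi fun s hs => ?_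
        have hs' : (0:ℝ) < s := hs
        have : ∏ i, gker τ (α i) (β i) ((s • fillMap (n + 1) u) i) = 0 := by
          refine Finset.prod_eq_zero (Finset.mem_univ i) ?_
          rw [gker, Set.indicator_of_notMem]
          simp only [Set.mem_Ioi, not_lt, Pi.smul_apply, smul_eq_mul]
          exact mul_nonpos_of_nonneg_of_nonpos hs'.le hi
        rw [this, ENNReal.ofReal_zero, mul_zero, Pi.zero_apply]
    · refine ENNReal.measurable_ofReal.comp (Finset.measurable_fun_prod _ fun i _ => ?_)
      exact (gker_measurable _ _ _).comp (measurable_pi_apply i)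
    · intro z hz
      obtain ⟨i, -, hi⟩ : ∃ i ∈ Finset.univ, z i ≤ 0 := by
        by_contra! h
        exact absurd (Finset.sum_pos h Finset.univ_nonempty) (not_lt.2 hz)
      rw [Finset.prod_eq_zero (Finset.mem_univ i), ENNReal.ofReal_zero]
      rw [gker, Set.indicator_of_notMem]
      simpa using hi
  have hint : ∫ x, F x ∂(simplexMeasure (n + 1)) =
      (∫⁻ u in D, ENNReal.ofReal (F (fillMap (n + 1) u))).toReal := by
    unfold simplexMeasure
    rw [integral_map (fillMap_measurable _).aemeasurable hFm.aestronglyMeasurable]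
    rw [integral_eq_lintegral_of_nonneg_ae]
    · rfl
    · filter_upwards [ae_restrict_mem hDm] with u hu
      exact hF0 u hu
    · exact (hFm.comp (fillMap_measurable _)).aestronglyMeasurable
  rw [hint]
  have hprod : 0 ≤ ∏ i, Real.Gamma (α i) / (τ * β i ^ α i) :=
    Finset.prod_nonneg fun i _ => by
      have := Real.Gamma_pos_of_pos (hα i)
      have := hβ i
      positivity
  have h2 := congrArg ENNReal.toReal hmain
  rw [ENNReal.toReal_mul, ENNReal.toReal_ofReal hprod, ENNReal.toReal_ofReal (by positivity)] at h2
  have h3 : ∏ i, Real.Gamma (α i) / (τ * β i ^ α i) =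
      (∏ i, Real.Gamma (α i) / β i ^ α i) / τ ^ (n + 1) := by
    have : ∀ i, Real.Gamma (α i) / (τ * β i ^ α i) = (Real.Gamma (α i) / β i ^ α i) / τ := by
      intro i
      rw [div_div, mul_comm]
    simp_rw [this]
    rw [Finset.prod_div_distrib]
    simp
  rw [h3, pow_succ] at h2
  rw [Nat.add_sub_cancel]
  field_simp at h2 ⊢
  linarith
end

section
/- Let K ≥ 2, τ > 0, and β ∈ ℝ^K with all β_i > 0. Let Y be uniformly distributed on the simplex S_K (i.e., Y has constant density (K−1)! with respect to the (K−1)-dimensional Lebesgue measure on S_K). Define T : S_K → S_K (on the interior) by T(y)_i = β_i^{1/τ} y_i^{−1/τ} / ∑_{j=1}^K β_j^{1/τ} y_j^{−1/τ}. Then X = T(Y) has the Concrete distribution C(β, τ); that is, the pushforward of the uniform measure on S_K under T has density f(x) = (K−1)! τ^{K−1} (∑_{j=1}^K β_j/x_j^τ)^{−K} ∏_{i=1}^K β_i/x_i^{τ+1} with respect to the (K−1)-dimensional Lebesgue measure on S_K. -/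
open MeasureTheory Finset

/-- The density of the Concrete distribution `C(β, τ)` on the simplex. -/
noncomputable def concreteDensity (K : ℕ) (β : Fin K → ℝ) (τ : ℝ) (x : Fin K → ℝ) : ℝ :=
  (Nat.factorial (K - 1) : ℝ) * τ ^ (K - 1) * (∑ j, β j / x j ^ τ) ^ (-(K : ℝ)) *
    ∏ i, β i / x i ^ (τ + 1)


namespace ConcreteAux

/-- The fill-up map with index `n + 1`. -/
noncomputable def fil (n : ℕ) (u : Fin n → ℝ) : Fin (n + 1) → ℝ :=
  fun i => if h : (i : ℕ) < n then u ⟨i, h⟩ else 1 - ∑ j, u j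

lemma fil_castSucc (n : ℕ) (u : Fin n → ℝ) (i : Fin n) : fil n u i.castSucc = u i := by
  simp [fil]

lemma fil_last (n : ℕ) (u : Fin n → ℝ) : fil n u (Fin.last n) = 1 - ∑ j, u j := by
  simp [fil]

lemma fil_sum (n : ℕ) (u : Fin n → ℝ) : ∑ i, fil n u i = 1 := by
  rw [Fin.sum_univ_castSucc]
  simp [fil_castSucc, fil_last]

lemma fil_init (n : ℕ) (x : Fin (n + 1) → ℝ) (hx : ∑ i, x i = 1) :
    fil n (fun i => x i.castSucc) = x := by
  rw [Fin.sum_univ_castSucc] at hx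
  funext i
  refine Fin.lastCases ?_ (fun i => ?_) i
  · rw [fil_last]; linarith
  · rw [fil_castSucc]

lemma fil_measurable (n : ℕ) : Measurable (fil n) := by
  rw [measurable_pi_iff]
  intro i
  refine Fin.lastCases ?_ (fun i => ?_) i
  · simp only [fil_last]; fun_prop
  · simp only [fil_castSucc]; fun_prop

/-- Open simplex in coordinates. -/
def opn (n : ℕ) : Set (Fin n → ℝ) := {u | (∀ j, 0 < u j) ∧ ∑ j, u j < 1}

lemma opn_measurable (n : ℕ) : MeasurableSet (opn n) := by
  have : opn n = (⋂ j, {u | 0 < u j}) ∩ {u | ∑ j, u j < 1} := by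
    ext u; simp [opn]
  rw [this]
  refine (MeasurableSet.iInter fun j => ?_).inter ?_
  · exact measurableSet_lt measurable_const (measurable_pi_apply j)
  · exact measurableSet_lt (by fun_prop) measurable_const

lemma mem_opn (n : ℕ) (u : Fin n → ℝ) : u ∈ opn n ↔ ∀ i, 0 < fil n u i := by
  constructor
  · rintro ⟨h1, h2⟩ i
    refine Fin.lastCases ?_ (fun i => ?_) i
    · rw [fil_last]; linarith
    · rw [fil_castSucc]; exact h1 i
  · intro h
    refine ⟨fun j => by simpa [fil_castSucc] using h j.castSucc, ?_⟩
    have := h (Fin.last n)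
    rw [fil_last] at this; linarith

lemma null_sum (n : ℕ) : volume {u : Fin n → ℝ | ∑ j, u j = 1} = 0 := by
  let A : AffineSubspace ℝ (Fin n → ℝ) :=
    { carrier := {u | ∑ j, u j = 1}
      smul_vsub_vadd_mem' := by
        intro c p q r hp hq hr
        simp only [Set.mem_ofPred_eq] at *
        simp [Finset.sum_add_distrib, ← Finset.mul_sum, hp, hq, hr] }
  have hA : A ≠ ⊤ := by
    intro h
    have : (0 : Fin n → ℝ) ∈ A := by rw [h]; trivial
    have h2 : ∑ j : Fin n, (0 : Fin n → ℝ) j = 1 := this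
    simp at h2
  exact Measure.addHaar_affineSubspace volume A hA

lemma restrict_eq (n : ℕ) :
    (volume : Measure (Fin n → ℝ)).restrict {u | (∀ j, 0 ≤ u j) ∧ ∑ j, u j ≤ 1} =
      volume.restrict (opn n) := by
  apply Measure.restrict_congr_set
  have h1 : ∀ᵐ u : Fin n → ℝ, ∑ j, u j ≠ 1 := by
    rw [ae_iff]; simpa using null_sum n
  have h2 : ∀ᵐ u : Fin n → ℝ, ∀ j, u j ≠ 0 := by
    rw [ae_all_iff]
    intro j
    rw [ae_iff]
    simpa [volume_pi] using Measure.pi_hyperplane (fun _ : Fin n => (volume : Measure ℝ)) j 0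
  filter_upwards [h1, h2] with u hu1 hu2
  apply propext
  constructor
  · rintro ⟨a, b⟩
    exact ⟨fun j => lt_of_le_of_ne (a j) (hu2 j).symm, lt_of_le_of_ne b hu1⟩
  · rintro ⟨a, b⟩
    exact ⟨fun j => (a j).le, b.le⟩

/-- The forward transformation. -/
noncomputable def T (n : ℕ) (β : Fin (n + 1) → ℝ) (τ : ℝ) (y : Fin (n + 1) → ℝ) :
    Fin (n + 1) → ℝ :=
  fun i => β i ^ (1 / τ) * y i ^ (-(1 / τ)) / ∑ j, β j ^ (1 / τ) * y j ^ (-(1 / τ))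

/-- The weights. -/
noncomputable def W (n : ℕ) (β : Fin (n + 1) → ℝ) (τ : ℝ) (x : Fin (n + 1) → ℝ) : ℝ :=
  ∑ j, β j / x j ^ τ

/-- The inverse transformation. -/
noncomputable def S (n : ℕ) (β : Fin (n + 1) → ℝ) (τ : ℝ) (x : Fin (n + 1) → ℝ) :
    Fin (n + 1) → ℝ :=
  fun i => (β i / x i ^ τ) / W n β τ x

/-- Inverse in coordinates. -/
noncomputable def G (n : ℕ) (β : Fin (n + 1) → ℝ) (τ : ℝ) (u : Fin n → ℝ) : Fin n → ℝ :=
  fun i => S n β τ (fil n u) i.castSucc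

variable {n : ℕ} {β : Fin (n + 1) → ℝ} {τ : ℝ}

lemma W_pos (hβ : ∀ i, 0 < β i) {x : Fin (n + 1) → ℝ} (hx : ∀ i, 0 < x i) :
    0 < W n β τ x :=
  Finset.sum_pos (fun i _ => div_pos (hβ i) (Real.rpow_pos_of_pos (hx i) _)) ⟨0, by simp⟩

lemma S_pos (hβ : ∀ i, 0 < β i) {x : Fin (n + 1) → ℝ} (hx : ∀ i, 0 < x i) (i) :
    0 < S n β τ x i :=
  div_pos (div_pos (hβ i) (Real.rpow_pos_of_pos (hx i) _)) (W_pos hβ hx)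

lemma S_sum (hβ : ∀ i, 0 < β i) {x : Fin (n + 1) → ℝ} (hx : ∀ i, 0 < x i) :
    ∑ i, S n β τ x i = 1 := by
  simp only [S]
  rw [← Finset.sum_div]
  exact div_self (W_pos hβ hx).ne'

lemma Z_pos (hβ : ∀ i, 0 < β i) {y : Fin (n + 1) → ℝ} (hy : ∀ i, 0 < y i) :
    0 < ∑ j, β j ^ (1 / τ) * y j ^ (-(1 / τ)) :=
  Finset.sum_pos (fun i _ => mul_pos (Real.rpow_pos_of_pos (hβ i) _)
    (Real.rpow_pos_of_pos (hy i) _)) ⟨0, by simp⟩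

lemma T_pos (hβ : ∀ i, 0 < β i) {y : Fin (n + 1) → ℝ} (hy : ∀ i, 0 < y i) (i) :
    0 < T n β τ y i :=
  div_pos (mul_pos (Real.rpow_pos_of_pos (hβ i) _)
    (Real.rpow_pos_of_pos (hy i) _)) (Z_pos hβ hy)

lemma T_sum (hβ : ∀ i, 0 < β i) {y : Fin (n + 1) → ℝ} (hy : ∀ i, 0 < y i) :
    ∑ i, T n β τ y i = 1 := by
  simp only [T]
  rw [← Finset.sum_div]
  exact div_self (Z_pos hβ hy).ne'

lemma T_S (hτ : 0 < τ) (hβ : ∀ i, 0 < β i) {x : Fin (n + 1) → ℝ} (hx : ∀ i, 0 < x i)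
    (hs : ∑ i, x i = 1) : T n β τ (S n β τ x) = x := by
  have hW := W_pos (τ := τ) hβ hx
  have key : ∀ i, β i ^ (1 / τ) * (S n β τ x i) ^ (-(1 / τ)) = x i * W n β τ x ^ (1 / τ) := by
    intro i
    have hb := hβ i
    have hxi := hx i
    have hxt := Real.rpow_pos_of_pos hxi τ
    simp only [S]
    rw [Real.rpow_neg (by positivity), Real.div_rpow (by positivity) hW.le,
      Real.div_rpow hb.le hxt.le, ← Real.rpow_mul hxi.le, mul_one_div_cancel hτ.ne',
      Real.rpow_one]
    have h1 := Real.rpow_pos_of_pos hb (1 / τ)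
    have h2 := Real.rpow_pos_of_pos hW (1 / τ)
    field_simp
  funext i
  simp only [T]
  rw [key i, Finset.sum_congr rfl (fun j _ => key j), ← Finset.sum_mul, hs, one_mul]
  exact mul_div_cancel_right₀ _ (Real.rpow_pos_of_pos hW _).ne'

lemma S_T (hτ : 0 < τ) (hβ : ∀ i, 0 < β i) {y : Fin (n + 1) → ℝ} (hy : ∀ i, 0 < y i)
    (hs : ∑ i, y i = 1) : S n β τ (T n β τ y) = y := by
  have hZ := Z_pos (τ := τ) hβ hy
  have key : ∀ i, β i / (T n β τ y i) ^ τ =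
      y i * (∑ j, β j ^ (1 / τ) * y j ^ (-(1 / τ))) ^ τ := by
    intro i
    have hb := hβ i
    have hyi := hy i
    have h1 := Real.rpow_pos_of_pos hb (1 / τ)
    have h2 := Real.rpow_pos_of_pos hyi (-(1 / τ))
    simp only [T]
    rw [Real.div_rpow (by positivity) hZ.le, Real.mul_rpow h1.le h2.le,
      ← Real.rpow_mul hb.le, ← Real.rpow_mul hyi.le, neg_mul, one_div_mul_cancel hτ.ne',
      Real.rpow_one, Real.rpow_neg_one]
    have h3 := Real.rpow_pos_of_pos hZ τ
    field_simp
  funext i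
  simp only [S, W]
  rw [key i, Finset.sum_congr rfl (fun j _ => key j), ← Finset.sum_mul, hs, one_mul]
  exact mul_div_cancel_right₀ _ (Real.rpow_pos_of_pos hZ _).ne'

lemma fil_G (hβ : ∀ i, 0 < β i) {u : Fin n → ℝ} (hu : u ∈ opn n) :
    fil n (G n β τ u) = S n β τ (fil n u) :=
  fil_init n _ (S_sum hβ ((mem_opn n u).1 hu))

lemma G_injOn (hτ : 0 < τ) (hβ : ∀ i, 0 < β i) : Set.InjOn (G n β τ) (opn n) := by
  intro u hu v hv h
  have h1 : fil n u = fil n v := by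
    rw [← T_S hτ hβ ((mem_opn n u).1 hu) (fil_sum n u),
      ← T_S hτ hβ ((mem_opn n v).1 hv) (fil_sum n v), ← fil_G hβ hu, ← fil_G hβ hv, h]
  funext i
  rw [← fil_castSucc n u, h1, fil_castSucc]

lemma G_image (hτ : 0 < τ) (hβ : ∀ i, 0 < β i) : G n β τ '' opn n = opn n := by
  ext v
  constructor
  · rintro ⟨u, hu, rfl⟩
    rw [mem_opn, fil_G hβ hu]
    exact S_pos hβ ((mem_opn n u).1 hu)
  · intro hv
    have hv' := (mem_opn n v).1 hv
    have hf := fil_init n _ (T_sum (τ := τ) hβ hv')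
    refine ⟨fun i => T n β τ (fil n v) i.castSucc, ?_, ?_⟩
    · rw [mem_opn, hf]
      exact T_pos hβ hv'
    · funext i
      simp only [G]
      rw [hf, S_T hτ hβ hv' (fil_sum n v), fil_castSucc]

/-- The Jacobian matrix. -/
noncomputable def M (n : ℕ) (β : Fin (n + 1) → ℝ) (τ : ℝ) (x : Fin (n + 1) → ℝ) :
    Matrix (Fin n) (Fin n) ℝ :=
  (-(τ / W n β τ x)) • (Matrix.diagonal (fun i => β i.castSucc / x i.castSucc ^ τ / x i.castSucc) *
    (1 + Matrix.replicateCol Unit (fun i : Fin n => -(x i.castSucc / W n β τ x)) *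
      Matrix.replicateRow Unit (fun j : Fin n => β j.castSucc / x j.castSucc ^ τ / x j.castSucc -
        β (Fin.last n) / x (Fin.last n) ^ τ / x (Fin.last n))))

lemma M_det (hβ : ∀ i, 0 < β i) {x : Fin (n + 1) → ℝ} (hx : ∀ i, 0 < x i)
    (hs : ∑ i, x i = 1) :
    (M n β τ x).det = (-τ) ^ n / W n β τ x ^ (n + 1) * ∏ i, (β i / x i ^ τ / x i) := by
  have hW := W_pos (τ := τ) hβ hx
  have hdot : 1 + (fun j : Fin n => β j.castSucc / x j.castSucc ^ τ / x j.castSucc -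
        β (Fin.last n) / x (Fin.last n) ^ τ / x (Fin.last n)) ⬝ᵥ
        (fun i : Fin n => -(x i.castSucc / W n β τ x)) =
      β (Fin.last n) / x (Fin.last n) ^ τ / x (Fin.last n) / W n β τ x := by
    set l := β (Fin.last n) / x (Fin.last n) ^ τ / x (Fin.last n) with hl
    have hWl : W n β τ x = ∑ i : Fin n, β i.castSucc / x i.castSucc ^ τ + l * x (Fin.last n) := by
      rw [W, Fin.sum_univ_castSucc, hl, div_mul_cancel₀ _ (hx _).ne']
    rw [Fin.sum_univ_castSucc] at hs
    have e : ∀ i : Fin n, (β i.castSucc / x i.castSucc ^ τ / x i.castSucc - l) *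
        -(x i.castSucc / W n β τ x) =
        (l * x i.castSucc - β i.castSucc / x i.castSucc ^ τ) / W n β τ x := by
      intro i
      have := (hx i.castSucc).ne'
      field_simp
      ring
    simp only [dotProduct]
    rw [Finset.sum_congr rfl (fun i _ => e i), ← Finset.sum_div, Finset.sum_sub_distrib,
      ← Finset.mul_sum, eq_div_iff hW.ne', add_mul, div_mul_cancel₀ _ hW.ne', one_mul]
    linear_combination hWl + l * hs
  rw [M, Matrix.det_smul, Matrix.det_mul, Matrix.det_diagonal,
    Matrix.det_one_add_replicateCol_mul_replicateRow, hdot, Fin.prod_univ_castSucc, Fintype.card_fin,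
    pow_succ, ← neg_div, div_pow]
  field_simp

/-- The derivative of a coordinate of the fill map. -/
noncomputable def L (n : ℕ) (k : Fin (n + 1)) : (Fin n → ℝ) →L[ℝ] ℝ :=
  Fin.lastCases (-∑ j, ContinuousLinearMap.proj j) (fun i => ContinuousLinearMap.proj i) k

lemma L_castSucc (i : Fin n) : L n i.castSucc = ContinuousLinearMap.proj i := by simp [L]

lemma L_last : L n (Fin.last n) = -∑ j, ContinuousLinearMap.proj j := by simp [L]

lemma fil_hasFDerivAt (u : Fin n → ℝ) (k : Fin (n + 1)) :
    HasFDerivAt (fun u => fil n u k) (L n k) u := by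
  refine Fin.lastCases ?_ (fun i => ?_) k
  · simp only [fil_last, L_last]
    exact (HasFDerivAt.fun_sum fun j _ => hasFDerivAt_apply j u).const_sub 1
  · simp only [fil_castSucc, L_castSucc]
    exact hasFDerivAt_apply i u

lemma w_hasFDerivAt {u : Fin n → ℝ} (hu : u ∈ opn n) (k : Fin (n + 1)) :
    HasFDerivAt (fun u => β k / fil n u k ^ τ)
      ((-τ * (β k / fil n u k ^ τ / fil n u k)) • L n k) u := by
  have hx := (mem_opn n u).1 hu k
  have h1 : HasDerivAt (fun x : ℝ => β k / x ^ τ)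
      (-τ * (β k / fil n u k ^ τ / fil n u k)) (fil n u k) := by
    have h := (Real.hasDerivAt_rpow_const (p := τ) (Or.inl hx.ne')).inv
      (Real.rpow_pos_of_pos hx τ).ne'
    have h' := h.const_mul (β k)
    refine (h'.congr_deriv ?_).congr_of_eventuallyEq ?_
    · rw [Real.rpow_sub_one hx.ne']
      have := Real.rpow_pos_of_pos hx τ
      field_simp
    · exact Filter.Eventually.of_forall fun x => by simp [div_eq_mul_inv]
  exact HasDerivAt.comp_hasFDerivAt (f := fun u => fil n u k) u h1 (fil_hasFDerivAt u k)

lemma G_hasFDerivAt (hβ : ∀ i, 0 < β i) {u : Fin n → ℝ} (hu : u ∈ opn n) :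
    HasFDerivAt (G n β τ) (Matrix.toLin' (M n β τ (fil n u))).toContinuousLinearMap u := by
  have hx := (mem_opn n u).1 hu
  have hW := W_pos (τ := τ) hβ hx
  rw [hasFDerivAt_pi']
  intro i
  have hWd : HasFDerivAt (fun u => W n β τ (fil n u))
      (∑ k, (-τ * (β k / fil n u k ^ τ / fil n u k)) • L n k) u :=
    HasFDerivAt.fun_sum fun k _ => w_hasFDerivAt hu k
  have hinv : HasFDerivAt (fun u => (W n β τ (fil n u))⁻¹)
      ((-(W n β τ (fil n u) ^ 2)⁻¹) •
        ∑ k, (-τ * (β k / fil n u k ^ τ / fil n u k)) • L n k) u :=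
    HasDerivAt.comp_hasFDerivAt (f := fun u => W n β τ (fil n u)) u (hasDerivAt_inv hW.ne') hWd
  have h := (w_hasFDerivAt (β := β) (τ := τ) hu i.castSucc).mul hinv
  have hM : ∀ v, (Matrix.toLin' (M n β τ (fil n u)) v) i = -(τ / W n β τ (fil n u)) *
      (β i.castSucc / fil n u i.castSucc ^ τ / fil n u i.castSucc *
        (v i + -(fil n u i.castSucc / W n β τ (fil n u)) * 
        ∑ j : Fin n, (β j.castSucc / fil n u j.castSucc ^ τ / fil n u j.castSucc -
        β (Fin.last n) / fil n u (Fin.last n) ^ τ / fil n u (Fin.last n)) * v j)) := by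
    intro v
    rw [Matrix.toLin'_apply, M, Matrix.smul_mulVec, ← Matrix.mulVec_mulVec, Pi.smul_apply,
      Matrix.mulVec_diagonal, Matrix.add_mulVec, ← Matrix.mulVec_mulVec, Matrix.one_mulVec,
      smul_eq_mul]
    congr 3
    simp [Matrix.mulVec, dotProduct, Matrix.mul_apply, Finset.mul_sum, mul_assoc]
  have hv : ∀ v, (∑ k, (-τ * (β k / fil n u k ^ τ / fil n u k)) • L n k) v =
      -τ * ∑ j : Fin n, (β j.castSucc / fil n u j.castSucc ^ τ / fil n u j.castSucc -
        β (Fin.last n) / fil n u (Fin.last n) ^ τ / fil n u (Fin.last n)) * v j := by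
    intro v
    rw [Fin.sum_univ_castSucc, L_last]
    simp only [L_castSucc, sub_mul, Finset.sum_sub_distrib, ← Finset.mul_sum, mul_sub]
    simp [Finset.mul_sum, mul_assoc]
  refine (h.congr_fderiv ?_).congr_of_eventuallyEq
    (Filter.Eventually.of_forall fun u => by simp [G, S, div_eq_mul_inv])
  refine ContinuousLinearMap.ext fun v => ?_
  change _ = (Matrix.toLin' (M n β τ (fil n u)) v) i
  rw [hM, ContinuousLinearMap.add_apply, ContinuousLinearMap.smul_apply,
    ContinuousLinearMap.smul_apply, ContinuousLinearMap.smul_apply,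
    ContinuousLinearMap.smul_apply, hv, L_castSucc, ContinuousLinearMap.proj_apply]
  simp only [smul_eq_mul]
  have h1 := (hx i.castSucc).ne'
  have h2 := (Real.rpow_pos_of_pos (hx i.castSucc) τ).ne'
  generalize ∑ j : Fin n, (β j.castSucc / fil n u j.castSucc ^ τ / fil n u j.castSucc -
        β (Fin.last n) / fil n u (Fin.last n) ^ τ / fil n u (Fin.last n)) * v j = Q
  field_simp
  ring

theorem main (hτ : 0 < τ) (hβ : ∀ i, 0 < β i) :
    Measure.map (T n β τ) ((Nat.factorial n : ENNReal) •
      Measure.map (fil n) (volume.restrict (opn n))) =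
    (Measure.map (fil n) (volume.restrict (opn n))).withDensity
      (fun x => ENNReal.ofReal (concreteDensity (n + 1) β τ x)) := by
  have hT : Measurable (T n β τ) := by
    unfold T; fun_prop
  have hd : Measurable (fun x => ENNReal.ofReal (concreteDensity (n + 1) β τ x)) := by
    unfold concreteDensity; fun_prop
  have hf := fil_measurable n
  have hm := opn_measurable n
  ext A hA
  rw [Measure.map_apply hT hA, Measure.smul_apply, Measure.map_apply hf (hT hA),
    withDensity_apply _ hA, setLIntegral_map hA hd hf, Measure.restrict_restrict (hf hA),
    Measure.restrict_apply (hf (hT hA)), smul_eq_mul]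
  have hB : MeasurableSet (fil n ⁻¹' (T n β τ ⁻¹' A)) := hf (hT hA)
  have e1 : volume (fil n ⁻¹' (T n β τ ⁻¹' A) ∩ opn n) =
      ∫⁻ v in G n β τ '' opn n, (fil n ⁻¹' (T n β τ ⁻¹' A)).indicator 1 v := by
    rw [G_image hτ hβ, lintegral_indicator_one hB, Measure.restrict_apply hB]
  rw [e1, lintegral_image_eq_lintegral_abs_det_fderiv_mul volume hm
    (fun u hu => (G_hasFDerivAt hβ hu).hasFDerivWithinAt) (G_injOn hτ hβ),
    ← lintegral_const_mul' _ _ (by simp), ← Measure.restrict_restrict (hf hA),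
    ← lintegral_indicator (hf hA)]
  refine setLIntegral_congr_fun hm fun u hu => ?_
  have hx := (mem_opn n u).1 hu
  have hW := W_pos (τ := τ) hβ hx
  have hmem : (G n β τ u ∈ fil n ⁻¹' (T n β τ ⁻¹' A)) ↔ u ∈ fil n ⁻¹' A := by
    simp only [Set.mem_preimage]
    rw [fil_G hβ hu, T_S hτ hβ hx (fil_sum n u)]
  by_cases h : u ∈ fil n ⁻¹' A
  · simp only [Set.indicator_of_mem h, Set.indicator_of_mem (hmem.2 h), Pi.one_apply, mul_one]
    rw [← ENNReal.ofReal_natCast, ← ENNReal.ofReal_mul (by positivity)]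
    congr 1
    rw [ContinuousLinearMap.det, LinearMap.coe_toContinuousLinearMap, LinearMap.det_toLin',
      M_det hβ hx (fil_sum n u), concreteDensity]
    have hp : 0 < ∏ i, (β i / fil n u i ^ τ / fil n u i) :=
      Finset.prod_pos fun i _ => div_pos (div_pos (hβ i) (Real.rpow_pos_of_pos (hx i) _)) (hx i)
    have hp2 : ∏ i, (β i / fil n u i ^ (τ + 1)) = ∏ i, (β i / fil n u i ^ τ / fil n u i) :=
      Finset.prod_congr rfl fun i _ => by
        rw [Real.rpow_add_one (hx i).ne', div_div]
    change _ = _ * _ * W n β τ (fil n u) ^ _ * _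
    rw [hp2, abs_mul, abs_div, abs_pow, abs_neg, abs_of_pos hτ, abs_of_pos hp,
      abs_of_pos (pow_pos hW _), Real.rpow_neg hW.le, Real.rpow_natCast]
    simp only [W, Nat.add_sub_cancel, div_eq_mul_inv]
    ring
  · simp only [Set.indicator_of_notMem h, Set.indicator_of_notMem (fun h' => h (hmem.1 h')),
      mul_zero]

end ConcreteAux

/-- The Concrete distribution is the pushforward of the uniform distribution on the
simplex (density `(K-1)!`) under the transformation
`T(y)_i = β_i^{1/τ} y_i^{-1/τ} / ∑_j β_j^{1/τ} y_j^{-1/τ}`. -/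
theorem concrete_as_transformed_uniform
    (K : ℕ) (hK : 2 ≤ K) (τ : ℝ) (hτ : 0 < τ)
    (β : Fin K → ℝ) (hβ : ∀ i, 0 < β i) :
    Measure.map
      (fun y : Fin K → ℝ => fun i =>
        β i ^ (1 / τ) * y i ^ (-(1 / τ)) / ∑ j, β j ^ (1 / τ) * y j ^ (-(1 / τ)))
      ((Nat.factorial (K - 1) : ENNReal) • simplexMeasure K)
    = (simplexMeasure K).withDensity
        (fun x => ENNReal.ofReal (concreteDensity K β τ x)) := by
  obtain ⟨n, rfl⟩ : ∃ n, K = n + 1 := ⟨K - 1, by omega⟩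
  have h : simplexMeasure (n + 1) = Measure.map (ConcreteAux.fil n)
      (volume.restrict (ConcreteAux.opn n)) := by
    rw [← ConcreteAux.restrict_eq n]
    rfl
  rw [h]
  exact ConcreteAux.main hτ hβ
end

section
/- Let K ≥ 2, τ > 0, and β ∈ ℝ^K with all β_i > 0. Let W_1, …, W_K be independent random variables each with standard Gumbel density e^{−(w + e^{−w})} on ℝ, and define X_i = softmax((W + log β)/τ)_i = exp((W_i + log β_i)/τ) / ∑_{j=1}^K exp((W_j + log β_j)/τ). Then X has the Concrete distribution C(β, τ); that is, the pushforward of the product of K standard Gumbel measures under the map w ↦ softmax((w + log β)/τ) is the measure on S_K with density f(x) = (K−1)! τ^{K−1} (∑_{j=1}^K β_j/x_j^τ)^{−K} ∏_{i=1}^K β_i/x_i^{τ+1} with respect to the (K−1)-dimensional Lebesgue measure on S_K. -/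
open MeasureTheory Finset

/-- The standard Gumbel distribution, with density `exp(-(w + exp(-w)))` on `ℝ`. -/
noncomputable def gumbelMeasure : Measure ℝ :=
  volume.withDensity (fun w => ENNReal.ofReal (Real.exp (-(w + Real.exp (-w)))))

/-- Density of `exp ((W + log b)/τ)` for a standard Gumbel `W`. -/
noncomputable def frechetDensity (τ b y : ℝ) : ℝ :=
  if 0 < y then τ * b * y ^ (-τ - 1) * Real.exp (-(b * y ^ (-τ))) else 0

lemma frechetDensity_measurable (τ b : ℝ) : Measurable (frechetDensity τ b) := by
  unfold frechetDensity
  refine Measurable.ite measurableSet_Ioi ?_ measurable_const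
  fun_prop

lemma map_gumbel (τ b : ℝ) (hτ : 0 < τ) (hb : 0 < b) :
    Measure.map (fun w : ℝ => Real.exp ((w + Real.log b) / τ)) gumbelMeasure
      = volume.withDensity (fun y => ENNReal.ofReal (frechetDensity τ b y)) := by
  have hm : Measurable (fun w : ℝ => Real.exp ((w + Real.log b) / τ)) := by fun_prop
  refine Measure.ext_of_lintegral _ fun f hf => ?_
  rw [lintegral_map hf hm, gumbelMeasure,
    lintegral_withDensity_eq_lintegral_mul _ (by fun_prop)
      (show Measurable fun w : ℝ => f (Real.exp ((w + Real.log b) / τ)) from hf.comp hm),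
    lintegral_withDensity_eq_lintegral_mul _ (frechetDensity_measurable τ b).ennreal_ofReal hf]
  have himg : (fun y : ℝ => τ * Real.log y - Real.log b) '' Set.Ioi 0 = Set.univ := by
    refine Set.eq_univ_of_forall fun w => ⟨Real.exp ((w + Real.log b) / τ), Real.exp_pos _, ?_⟩
    simp only [Real.log_exp]
    field_simp
    ring
  have hcv := lintegral_image_eq_lintegral_abs_deriv_mul (s := Set.Ioi (0:ℝ))
    (f := fun y : ℝ => τ * Real.log y - Real.log b) (f' := fun y => τ * y⁻¹)
    measurableSet_Ioi
    (fun x hx => (((Real.hasDerivAt_log (ne_of_gt hx)).const_mul τ).sub_const _).hasDerivWithinAt)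
    (fun x hx y hy h => by
      have h1 : τ * Real.log x = τ * Real.log y := by simpa using h
      exact Real.log_injOn_pos hx hy (mul_left_cancel₀ hτ.ne' h1))
    (((fun w => ENNReal.ofReal (Real.exp (-(w + Real.exp (-w))))) *
      fun w => f (Real.exp ((w + Real.log b) / τ))))
  rw [himg, Measure.restrict_univ] at hcv
  rw [hcv, ← lintegral_indicator measurableSet_Ioi]
  congr 1
  ext y
  by_cases hy : 0 < y
  · have hy' : y ∈ Set.Ioi (0:ℝ) := hy
    have e1 : Real.exp ((τ * Real.log y - Real.log b + Real.log b) / τ) = y := by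
      rw [sub_add_cancel, mul_div_cancel_left₀ _ hτ.ne', Real.exp_log hy]
    have e2 : Real.exp (-(τ * Real.log y - Real.log b)) = b * y ^ (-τ) := by
      rw [Real.rpow_def_of_pos hy, neg_sub, sub_eq_add_neg, Real.exp_add, Real.exp_log hb]
      congr 2; ring
    simp only [Set.indicator_of_mem hy', Pi.mul_apply, e1]
    rw [← mul_assoc, ← ENNReal.ofReal_mul (abs_nonneg _)]
    congr 2
    rw [neg_add, Real.exp_add, e2, abs_of_pos (by positivity), frechetDensity, if_pos hy,
      Real.rpow_sub_one hy.ne']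
    field_simp
  · have hy' : y ∉ Set.Ioi (0:ℝ) := hy
    simp [Set.indicator_of_notMem hy', frechetDensity, hy]

lemma lintegral_prod_fin (n : ℕ) (f : Fin n → ℝ → ENNReal) (hf : ∀ i, Measurable (f i)) :
    ∫⁻ x : Fin n → ℝ, ∏ i, f i (x i) = ∏ i, ∫⁻ t, f i t := by
  induction n with
  | zero => simp [volume_pi, Measure.pi_univ]
  | succ n ih =>
    have hmp := (volume_preserving_piFinSuccAbove (fun _ : Fin (n+1) => ℝ) 0).symm
    rw [← hmp.lintegral_comp_emb (MeasurableEquiv.measurableEmbedding _)]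
    simp only [Fin.prod_univ_succ]
    rw [← ih (fun i => f i.succ) (fun i => hf _), ← lintegral_prod_mul]
    · congr 1
    · exact (hf 0).aemeasurable
    · refine Measurable.aemeasurable ?_
      exact Finset.measurable_prod _ fun i _ => (hf _).comp (measurable_pi_apply i)

lemma pi_withDensity_fin (n : ℕ) (f : Fin n → ℝ → ℝ) (hf : ∀ i, Measurable (f i)) :
    Measure.pi (fun i => (volume : Measure ℝ).withDensity (fun y => ENNReal.ofReal (f i y)))
      = (volume : Measure (Fin n → ℝ)).withDensity
          (fun y => ∏ i, ENNReal.ofReal (f i (y i))) := by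
  refine Measure.pi_eq fun s hs => ?_
  rw [withDensity_apply _ (MeasurableSet.univ_pi hs),
    ← lintegral_indicator (MeasurableSet.univ_pi hs)]
  have : ∀ y : Fin n → ℝ, (Set.univ.pi s).indicator
      (fun y => ∏ i, ENNReal.ofReal (f i (y i))) y
      = ∏ i, (s i).indicator (fun t => ENNReal.ofReal (f i t)) (y i) := by
    intro y
    by_cases hy : y ∈ Set.univ.pi s
    · rw [Set.indicator_of_mem hy]
      exact Finset.prod_congr rfl fun i _ => by rw [Set.indicator_of_mem (hy i trivial)]
    · rw [Set.indicator_of_notMem hy]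
      simp only [Set.mem_pi, Set.mem_univ, true_imp_iff, not_forall] at hy
      obtain ⟨i, hi⟩ := hy
      exact (Finset.prod_eq_zero (Finset.mem_univ i) (Set.indicator_of_notMem hi _)).symm
  simp only [this]
  rw [lintegral_prod_fin n (fun i => (s i).indicator (fun t => ENNReal.ofReal (f i t)))
    (fun i => (hf i).ennreal_ofReal.indicator (hs i))]
  exact Finset.prod_congr rfl fun i _ => by
    rw [lintegral_indicator (hs i), withDensity_apply _ (hs i)]

lemma fillMap_succ (n : ℕ) (u : Fin n → ℝ) :
    fillMap (n+1) u = (Fin.snoc u (1 - ∑ j, u j) : Fin (n+1) → ℝ) := by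
  ext i
  simp only [fillMap, Fin.snoc, Nat.add_sub_cancel]
  rfl

lemma fillMap_measurable_s2 (n : ℕ) : Measurable (fillMap (n+1)) := by
  refine measurable_pi_lambda _ fun i => ?_
  unfold fillMap
  split_ifs <;> fun_prop

lemma sum_fillMap (n : ℕ) (u : Fin n → ℝ) : ∑ i, fillMap (n+1) u i = 1 := by
  rw [fillMap_succ, Fin.sum_univ_castSucc]
  simp

lemma lintegral_smul_pos (n : ℕ) (S : ℝ) (hS : 0 < S) (g : (Fin n → ℝ) → ENNReal)
    (hg : Measurable g) :
    ∫⁻ y, g y = ENNReal.ofReal (S ^ n) * ∫⁻ u, g (S • u) := by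
  have h := Measure.map_addHaar_smul (volume : Measure (Fin n → ℝ)) hS.ne'
  have h2 : ∫⁻ u, g (S • u) = ∫⁻ y, g y ∂(Measure.map (S • ·) volume) :=
    (lintegral_map hg (measurable_const_smul S)).symm
  rw [h2, h, lintegral_smul_measure, smul_eq_mul, ← mul_assoc, ← ENNReal.ofReal_mul (by positivity)]
  rw [abs_of_pos (by positivity)]
  simp [mul_inv_cancel₀ (pow_pos hS n).ne']

lemma polar_simplex (n : ℕ) (G : (Fin (n+1) → ℝ) → ENNReal) (hG : Measurable G)
    (hsupp : ∀ y, ∑ i, y i ≤ 0 → G y = 0) :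
    ∫⁻ y, G y = ∫⁻ u : Fin n → ℝ, ∫⁻ S in Set.Ioi (0:ℝ),
      ENNReal.ofReal (S ^ n) * G (S • fillMap (n+1) u) := by
  have hmp := (volume_preserving_piFinSuccAbove (fun _ : Fin (n+1) => ℝ) (Fin.last n)).symm
  rw [← hmp.lintegral_comp_emb (MeasurableEquiv.measurableEmbedding _)]
  have hsn : Measurable fun p : ℝ × (Fin n → ℝ) => (Fin.snoc p.2 p.1 : Fin (n+1) → ℝ) := by
    refine measurable_pi_lambda _ fun i => ?_
    refine Fin.lastCases ?_ (fun i => ?_) i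
    · simpa using measurable_fst
    · simp only [Fin.snoc_castSucc]; fun_prop
  have hins : ∀ p : ℝ × (Fin n → ℝ),
      (MeasurableEquiv.piFinSuccAbove (fun _ : Fin (n+1) => ℝ) (Fin.last n)).symm p
        = (Fin.snoc p.2 p.1 : Fin (n+1) → ℝ) := by
    intro p
    exact Fin.insertNth_last (α := fun _ => ℝ) p.1 p.2
  simp only [hins]
  rw [Measure.volume_eq_prod, lintegral_prod_symm'
    (fun p : ℝ × (Fin n → ℝ) => G (Fin.snoc p.2 p.1 : Fin (n+1) → ℝ)) (hG.comp hsn)]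
  have h1 : ∀ v : Fin n → ℝ, ∫⁻ a : ℝ, G (Fin.snoc v a : Fin (n+1) → ℝ)
      = ∫⁻ S : ℝ, G (Fin.snoc v (S - ∑ j, v j) : Fin (n+1) → ℝ) := by
    intro v
    exact (lintegral_sub_right_eq_self
      (fun a => G (Fin.snoc v a : Fin (n+1) → ℝ)) (∑ j, v j)).symm
  simp only [h1]
  have hsn2 : Measurable fun p : (Fin n → ℝ) × ℝ =>
      (Fin.snoc p.1 (p.2 - ∑ j, p.1 j) : Fin (n+1) → ℝ) :=
    hsn.comp (f := fun p : (Fin n → ℝ) × ℝ => (p.2 - ∑ j, p.1 j, p.1)) (by fun_prop)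
  rw [lintegral_lintegral_swap (f := fun (v : Fin n → ℝ) (S : ℝ) =>
      G (Fin.snoc v (S - ∑ j, v j) : Fin (n+1) → ℝ)) (hG.comp hsn2).aemeasurable]
  have hfm := fillMap_measurable_s2 n
  have hsm : Measurable fun p : (Fin n → ℝ) × ℝ =>
      ENNReal.ofReal (p.2 ^ n) * G (p.2 • fillMap (n+1) p.1) := by
    refine Measurable.mul (by fun_prop) (hG.comp ?_)
    exact measurable_snd.smul (hfm.comp measurable_fst)
  rw [lintegral_lintegral_swap (f := fun (u : Fin n → ℝ) (S : ℝ) =>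
      ENNReal.ofReal (S ^ n) * G (S • fillMap (n+1) u)) hsm.aemeasurable]
  rw [← lintegral_indicator measurableSet_Ioi]
  congr 1
  ext S
  by_cases hS : 0 < S
  · rw [Set.indicator_of_mem (show S ∈ Set.Ioi (0:ℝ) from hS)]
    have hm1 : Measurable fun x : Fin n → ℝ =>
        (Fin.snoc x (S - ∑ j, x j) : Fin (n+1) → ℝ) :=
      hsn2.comp (f := fun x : Fin n → ℝ => (x, S)) (by fun_prop)
    rw [lintegral_smul_pos n S hS
      (fun x => G (Fin.snoc x (S - ∑ j, x j) : Fin (n+1) → ℝ)) (hG.comp hm1)]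
    rw [lintegral_const_mul']
    · congr 2
      ext u
      congr 1
      rw [fillMap_succ]
      ext i
      refine Fin.lastCases ?_ (fun i => ?_) i
      · simp [mul_sub, Finset.mul_sum]
      · simp
    · exact ENNReal.ofReal_ne_top
  · rw [Set.indicator_of_notMem (show S ∉ Set.Ioi (0:ℝ) from hS)]
    rw [lintegral_eq_zero_of_ae_eq_zero]
    refine Filter.Eventually.of_forall fun v => ?_
    refine hsupp _ ?_
    rw [Fin.sum_univ_castSucc]
    simpa using hS

lemma radial_integral (n : ℕ) (τ c : ℝ) (hτ : 0 < τ) (hc : 0 < c) :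
    ∫⁻ S in Set.Ioi (0:ℝ),
      ENNReal.ofReal (τ * S ^ (-τ - 1) * ((S ^ (-τ)) ^ n * Real.exp (-(c * S ^ (-τ)))))
      = ENNReal.ofReal ((n.factorial : ℝ) * c ^ (-((n + 1 : ℕ) : ℝ))) := by
  have hk := Real.integral_rpow_mul_exp_neg_mul_Ioi (a := (n:ℝ) + 1) (by positivity) hc
  simp only [add_sub_cancel_right, Real.rpow_natCast, Real.Gamma_nat_eq_factorial] at hk
  have hIntegr : IntegrableOn (fun t : ℝ => t ^ n * Real.exp (-(c * t))) (Set.Ioi 0) :=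
    .of_integral_ne_zero (by rw [hk]; positivity)
  have hτ' : -τ ≠ 0 := by linarith
  have h1 := integral_comp_rpow_Ioi (fun t : ℝ => t ^ n * Real.exp (-(c * t))) hτ'
  have h2 := (integrableOn_Ioi_comp_rpow_iff (fun t : ℝ => t ^ n * Real.exp (-(c * t))) hτ').2 hIntegr
  simp only [abs_neg, abs_of_pos hτ, smul_eq_mul] at h1 h2
  rw [← ofReal_integral_eq_lintegral_ofReal h2, h1, hk]
  · congr 1
    rw [one_div, Real.inv_rpow hc.le, ← Real.rpow_neg hc.le]
    push_cast
    ring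
  · rw [Filter.EventuallyLE, ae_restrict_iff' measurableSet_Ioi]
    refine ae_of_all _ fun x hx => ?_
    have : 0 < x := hx
    simp only [Pi.zero_apply]
    positivity

lemma fiber_integral (n : ℕ) (τ : ℝ) (hτ : 0 < τ) (β : Fin (n+1) → ℝ) (hβ : ∀ i, 0 < β i)
    (x : Fin (n+1) → ℝ) (hx : ∀ i, 0 < x i) :
    ∫⁻ S in Set.Ioi (0:ℝ), ENNReal.ofReal (S ^ n) *
        ∏ i, ENNReal.ofReal (frechetDensity τ (β i) (S * x i))
      = ENNReal.ofReal (concreteDensity (n+1) β τ x) := by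
  set c := ∑ j, β j / x j ^ τ with hcdef
  have hc : 0 < c := Finset.sum_pos
    (fun i _ => div_pos (hβ i) (Real.rpow_pos_of_pos (hx i) _)) Finset.univ_nonempty
  set A := τ ^ n * ∏ i, β i / x i ^ (τ + 1) with hA
  have hA0 : 0 ≤ A := mul_nonneg (by positivity) (Finset.prod_nonneg fun i _ =>
    (div_pos (hβ i) (Real.rpow_pos_of_pos (hx i) _)).le)
  have key : ∀ S ∈ Set.Ioi (0:ℝ), ENNReal.ofReal (S ^ n) *
        ∏ i, ENNReal.ofReal (frechetDensity τ (β i) (S * x i))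
      = ENNReal.ofReal A * ENNReal.ofReal
        (τ * S ^ (-τ - 1) * ((S ^ (-τ)) ^ n * Real.exp (-(c * S ^ (-τ))))) := by
    intro S hS
    have hS : 0 < S := hS
    have hfd : ∀ i, frechetDensity τ (β i) (S * x i)
        = τ * S ^ (-τ - 1) * (β i / x i ^ (τ + 1)) * Real.exp (-(β i / x i ^ τ * S ^ (-τ))) := by
      intro i
      rw [frechetDensity, if_pos (mul_pos hS (hx i)), Real.mul_rpow hS.le (hx i).le,
        Real.mul_rpow hS.le (hx i).le, Real.rpow_neg (hx i).le τ,
        show -τ - 1 = -(τ + 1) by ring, Real.rpow_neg (hx i).le (τ + 1)]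
      congr 1
      · ring
      · congr 1; ring
    rw [← ENNReal.ofReal_prod_of_nonneg, ← ENNReal.ofReal_mul (by positivity),
      ← ENNReal.ofReal_mul hA0]
    · congr 1
      simp only [hfd]
      rw [Finset.prod_mul_distrib, Finset.prod_mul_distrib, Finset.prod_const, Finset.card_univ,
        Fintype.card_fin, ← Real.exp_sum, Finset.sum_neg_distrib, ← Finset.sum_mul, ← hcdef, hA,
        Real.rpow_sub_one hS.ne']
      rw [mul_pow, pow_succ τ, pow_succ (S ^ (-τ) / S), div_pow]
      field_simp
    · intro i _
      rw [hfd]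
      have := hβ i
      have := hx i
      positivity
  rw [setLIntegral_congr_fun measurableSet_Ioi key, lintegral_const_mul' _ _ ENNReal.ofReal_ne_top,
    radial_integral n τ c hτ hc, ← ENNReal.ofReal_mul hA0]
  congr 1
  rw [concreteDensity, ← hcdef, hA]
  simp only [Nat.add_sub_cancel]
  ring

lemma concreteDensity_measurable (K : ℕ) (β : Fin K → ℝ) (τ : ℝ) :
    Measurable (concreteDensity K β τ) := by
  unfold concreteDensity
  fun_prop

lemma concreteDensity_zero (K : ℕ) (β : Fin K → ℝ) (τ : ℝ) (hτ : 0 < τ) (x : Fin K → ℝ)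
    (i : Fin K) (hi : x i = 0) : concreteDensity K β τ x = 0 := by
  unfold concreteDensity
  rw [Finset.prod_eq_zero (Finset.mem_univ i), mul_zero]
  rw [hi, Real.zero_rpow (by linarith), div_zero]

lemma concrete_succ (n : ℕ) (τ : ℝ) (hτ : 0 < τ)
    (β : Fin (n+1) → ℝ) (hβ : ∀ i, 0 < β i) :
    Measure.map
      (fun w : Fin (n+1) → ℝ => fun i =>
        Real.exp ((w i + Real.log (β i)) / τ) /
          ∑ j, Real.exp ((w j + Real.log (β j)) / τ))
      (Measure.pi fun _ : Fin (n+1) => gumbelMeasure)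
    = (simplexMeasure (n+1)).withDensity
        (fun x => ENNReal.ofReal (concreteDensity (n+1) β τ x)) := by
  have : SigmaFinite gumbelMeasure := by
    unfold gumbelMeasure
    exact SigmaFinite.withDensity_ofReal _
  have hsf : ∀ i, SigmaFinite
      (Measure.map (fun w : ℝ => Real.exp ((w + Real.log (β i)) / τ)) gumbelMeasure) := by
    intro i
    rw [map_gumbel τ _ hτ (hβ i)]
    exact SigmaFinite.withDensity_ofReal _
  have hpi := Measure.pi_map_pi (μ := fun _ : Fin (n+1) => gumbelMeasure)
    (f := fun i (w : ℝ) => Real.exp ((w + Real.log (β i)) / τ))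
    (fun i => by fun_prop)
  simp only [fun i => map_gumbel τ _ hτ (hβ i)] at hpi
  rw [pi_withDensity_fin _ _ (fun i => frechetDensity_measurable τ (β i))] at hpi
  have hN : Measurable fun y : Fin (n+1) → ℝ => fun i => y i / ∑ j, y j := by fun_prop
  have hcomp : (fun w : Fin (n+1) → ℝ => fun i =>
        Real.exp ((w i + Real.log (β i)) / τ) /
          ∑ j, Real.exp ((w j + Real.log (β j)) / τ))
      = (fun y : Fin (n+1) → ℝ => fun i => y i / ∑ j, y j) ∘
        (fun w i => Real.exp ((w i + Real.log (β i)) / τ)) := rfl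
  rw [hcomp, ← Measure.map_map hN (by fun_prop), hpi]
  have hD : Measurable fun y : Fin (n+1) → ℝ =>
      ∏ i, ENNReal.ofReal (frechetDensity τ (β i) (y i)) :=
    Finset.measurable_prod _ fun i _ =>
      ((frechetDensity_measurable τ (β i)).comp (measurable_pi_apply i)).ennreal_ofReal
  have hC := (concreteDensity_measurable (n+1) β τ).ennreal_ofReal
  have hfm := fillMap_measurable_s2 n
  have hzero : ∀ y : Fin (n+1) → ℝ, ∀ i, y i ≤ 0 →
      ∏ i, ENNReal.ofReal (frechetDensity τ (β i) (y i)) = 0 := by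
    intro y i hi
    refine Finset.prod_eq_zero (Finset.mem_univ i) ?_
    rw [frechetDensity, if_neg (not_lt.2 hi), ENNReal.ofReal_zero]
  have hms : MeasurableSet {u : Fin n → ℝ | (∀ j, 0 ≤ u j) ∧ ∑ j, u j ≤ 1} := by
    measurability
  refine Measure.ext_of_lintegral _ fun f hf => ?_
  have hfN : Measurable fun y : Fin (n+1) → ℝ => f (fun i => y i / ∑ j, y j) := hf.comp hN
  rw [lintegral_map hf hN, lintegral_withDensity_eq_lintegral_mul _ hD hfN,
    lintegral_withDensity_eq_lintegral_mul _ hC hf, simplexMeasure,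
    lintegral_map (hC.mul hf) hfm]
  rw [polar_simplex n _ (hD.mul hfN)]
  · refine Eq.trans ?_ (lintegral_indicator hms _)
    congr 1
    ext u
    have hlast : fillMap (n+1) u (Fin.last n) = 1 - ∑ j, u j := by
      rw [fillMap_succ]; simp
    have hcast : ∀ j : Fin n, fillMap (n+1) u j.castSucc = u j := by
      intro j; rw [fillMap_succ]; simp
    have hsimp : ∀ S ∈ Set.Ioi (0:ℝ), ENNReal.ofReal (S ^ n) *
        ((fun y : Fin (n+1) → ℝ => ∏ i, ENNReal.ofReal (frechetDensity τ (β i) (y i))) *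
          (fun y : Fin (n+1) → ℝ => f (fun i => y i / ∑ j, y j))) (S • fillMap (n+1) u)
        = (ENNReal.ofReal (S ^ n) *
          ∏ i, ENNReal.ofReal (frechetDensity τ (β i) (S * fillMap (n+1) u i))) *
          f (fillMap (n+1) u) := by
      intro S hS
      have hS : 0 < S := hS
      simp only [Pi.mul_apply, Pi.smul_apply, smul_eq_mul]
      rw [← Finset.mul_sum, sum_fillMap, mul_one, mul_assoc]
      congr 3
      ext i
      field_simp
    refine (setLIntegral_congr_fun measurableSet_Ioi hsimp).trans ?_
    by_cases hpos : ∀ i, 0 < fillMap (n+1) u i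
    · have hu : u ∈ {u : Fin n → ℝ | (∀ j, 0 ≤ u j) ∧ ∑ j, u j ≤ 1} := by
        refine ⟨fun j => ?_, ?_⟩
        · have := hpos j.castSucc
          rw [hcast] at this
          exact this.le
        · have := hpos (Fin.last n)
          rw [hlast] at this
          linarith
      rw [Set.indicator_of_mem hu, lintegral_mul_const, fiber_integral n τ hτ β hβ _ hpos]
      · rfl
      · refine Measurable.mul (by fun_prop) (hD.comp (f := fun (S : ℝ) i => S * fillMap (n+1) u i) ?_)
        fun_prop
    · push Not at hpos
      obtain ⟨i, hi⟩ := hpos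
      rw [setLIntegral_congr_fun (g := fun _ => 0) measurableSet_Ioi]
      · rw [lintegral_zero]
        symm
        by_cases hu : u ∈ {u : Fin n → ℝ | (∀ j, 0 ≤ u j) ∧ ∑ j, u j ≤ 1}
        · rw [Set.indicator_of_mem hu]
          have hi0 : fillMap (n+1) u i = 0 := by
            refine le_antisymm hi ?_
            refine Fin.lastCases ?_ (fun j => ?_) i
            · rw [hlast]; linarith [hu.2]
            · rw [hcast]; exact hu.1 j
          simp only [Pi.mul_apply]
          rw [concreteDensity_zero (n+1) β τ hτ _ i hi0, ENNReal.ofReal_zero, zero_mul]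
        · exact Set.indicator_of_notMem hu _
      · intro S hS
        have hS : 0 < S := hS
        simp only
        rw [hzero (fun i => S * fillMap (n+1) u i) i
          (mul_nonpos_of_nonneg_of_nonpos hS.le hi), mul_zero, zero_mul]
  · intro y hy
    have : ∃ i, y i ≤ 0 := by
      by_contra! h
      exact absurd (Finset.sum_pos (fun i _ => h i) Finset.univ_nonempty) (not_lt.2 hy)
    obtain ⟨i, hi⟩ := this
    rw [Pi.mul_apply, hzero y i hi, zero_mul]

/-- The pushforward of a product of `K` independent standard Gumbel distributions
under `w ↦ softmax((w + log β)/τ)` is the Concrete distribution `C(β, τ)`. -/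
theorem gumbel_softmax_is_concrete
    (K : ℕ) (hK : 2 ≤ K) (τ : ℝ) (hτ : 0 < τ)
    (β : Fin K → ℝ) (hβ : ∀ i, 0 < β i) :
    Measure.map
      (fun w : Fin K → ℝ => fun i =>
        Real.exp ((w i + Real.log (β i)) / τ) /
          ∑ j, Real.exp ((w j + Real.log (β j)) / τ))
      (Measure.pi fun _ : Fin K => gumbelMeasure)
    = (simplexMeasure K).withDensity
        (fun x => ENNReal.ofReal (concreteDensity K β τ x)) := by
  obtain ⟨n, rfl⟩ : ∃ n, K = n + 1 := ⟨K - 1, by omega⟩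
  exact concrete_succ n τ hτ β hβ
end

section
/- Let K ≥ 2, τ > 0, and β ∈ ℝ^K with all β_i > 0, and let X have the Concrete distribution C(β, τ). Then for each index i, the rounding probability P[X_i = max(X_1, …, X_K)] equals β_i / ∑_{j=1}^K β_j; in particular this probability is independent of the temperature τ. Equivalently, ∫_{{x ∈ S_K : x_i ≥ x_j for all j}} f(x) d^{K−1}x = β_i / ∑_{j=1}^K β_j. -/
open MeasureTheory Finset

open Set in
lemma aux_exp {b : ℝ} (hb : 0 < b) (a : ℝ) :
    ∫⁻ s in Ici a, ENNReal.ofReal (b * Real.exp (-(b * s))) = ENNReal.ofReal (Real.exp (-(b * a))) := by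
  have hb' : -b < 0 := by linarith
  rw [setLIntegral_congr (Ioi_ae_eq_Ici (a := a)).symm]
  rw [← ofReal_integral_eq_lintegral_ofReal]
  · congr 1
    rw [integral_const_mul]
    have := integral_exp_mul_Ioi hb' a
    simp only [neg_mul] at this
    rw [this]
    field_simp
  · have := (integrableOn_exp_mul_Ioi hb' a).const_mul b
    simpa [neg_mul] using this
  · exact ae_of_all _ fun x => by positivity

open Set in
lemma aux_gamma {A : ℝ} (hA : 0 < A) (n : ℕ) :
    ∫⁻ s in Ioi (0:ℝ), ENNReal.ofReal (s ^ n * Real.exp (-(A * s)))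
      = ENNReal.ofReal ((n.factorial : ℝ) * A ^ (-((n + 1 : ℕ) : ℝ))) := by
  have h := Real.integral_rpow_mul_exp_neg_mul_Ioi (a := (n + 1 : ℝ)) (r := A) (by positivity) hA
  simp only [add_sub_cancel_right, Real.rpow_natCast] at h
  rw [← ofReal_integral_eq_lintegral_ofReal]
  · rw [h, Real.Gamma_nat_eq_factorial, one_div, Real.inv_rpow hA.le, ← Real.rpow_neg hA.le, mul_comm]
    push_cast
    rfl
  · by_contra hc
    rw [integral_undef hc] at h
    have : 0 < (1 / A) ^ ((n:ℝ) + 1) * Real.Gamma (n + 1) :=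
      mul_pos (by positivity) (Real.Gamma_pos_of_pos (by positivity))
    linarith
  · filter_upwards [ae_restrict_mem measurableSet_Ioi] with x hx
    have : 0 < x := hx
    positivity

open Set in
lemma aux_cov {τ : ℝ} (hτ : 0 < τ) (u : ℝ → ENNReal) :
    ∫⁻ t in Ioi (0:ℝ), ENNReal.ofReal (τ * t ^ (-τ - 1)) * u (t ^ (-τ)) = ∫⁻ s in Ioi (0:ℝ), u s := by
  have him : Set.image (fun t : ℝ => t ^ (-τ)) (Set.Ioi (0:ℝ)) = Set.Ioi (0:ℝ) := by
    ext x
    constructor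
    · rintro ⟨y, hy, rfl⟩
      exact Real.rpow_pos_of_pos hy _
    · intro hx
      refine ⟨x ^ (1 / (-τ)), Real.rpow_pos_of_pos hx _, ?_⟩
      have : (0:ℝ) ≤ x := le_of_lt hx
      have h2 : -τ ≠ 0 := by linarith
      simp only
      rw [← Real.rpow_mul this, one_div, inv_mul_cancel₀ h2, Real.rpow_one]
  have h := lintegral_image_eq_lintegral_deriv_mul_of_antitoneOn (f := fun t : ℝ => t ^ (-τ))
    (f' := fun t => (-τ) * t ^ (-τ - 1)) (s := Ioi (0:ℝ)) measurableSet_Ioi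
    (fun x hx => (Real.hasDerivAt_rpow_const (Or.inl (ne_of_gt hx))).hasDerivWithinAt)
    (fun x hx y hy hxy => Real.rpow_le_rpow_of_nonpos hx hxy (by linarith)) u
  rw [him] at h
  rw [h]
  simp

noncomputable def gd (τ b : ℝ) : ℝ → ENNReal :=
  (Set.Ioi (0:ℝ)).indicator fun t =>
    ENNReal.ofReal (τ * t ^ (-τ - 1)) * ENNReal.ofReal (b * Real.exp (-(b * t ^ (-τ))))

lemma gd_meas (τ b : ℝ) : Measurable (gd τ b) := by
  unfold gd
  refine Measurable.indicator ?_ measurableSet_Ioi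
  fun_prop

open Set in
lemma gd_Iic {τ b : ℝ} (hτ : 0 < τ) (hb : 0 < b) {T : ℝ} (hT : 0 < T) :
    ∫⁻ t, (Iic T).indicator (gd τ b) t = ENNReal.ofReal (Real.exp (-(b * T ^ (-τ)))) := by
  have h1 : ∀ t, (Iic T).indicator (gd τ b) t = (Ioi (0:ℝ)).indicator (fun t =>
      ENNReal.ofReal (τ * t ^ (-τ - 1)) *
      (Ici (T ^ (-τ))).indicator (fun s => ENNReal.ofReal (b * Real.exp (-(b * s)))) (t ^ (-τ))) t := by
    intro t
    by_cases ht : 0 < t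
    · have : t ≤ T ↔ T ^ (-τ) ≤ t ^ (-τ) :=
        (Real.rpow_le_rpow_iff_of_neg hT ht (by linarith)).symm
      by_cases h : t ≤ T
      · simp [gd, indicator, ht, h, this.1 h]
      · simp [gd, indicator, ht, h, mt this.2 h]
    · simp [gd, indicator, ht]
  simp_rw [h1]
  rw [lintegral_indicator measurableSet_Ioi, aux_cov hτ, setLIntegral_indicator measurableSet_Ici,
    inter_eq_left.2, aux_exp hb]
  exact fun x hx => lt_of_lt_of_le (Real.rpow_pos_of_pos hT _) hx

lemma lint_split {n : ℕ} (i : Fin (n + 1)) (F : (Fin (n + 1) → ℝ) → ENNReal) (hF : Measurable F) :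
    ∫⁻ y, F y = ∫⁻ t : ℝ, ∫⁻ z : Fin n → ℝ, F (i.insertNth t z) := by
  have h := (volume_preserving_piFinSuccAbove (fun _ : Fin (n + 1) => ℝ) i).symm
  rw [← h.lintegral_comp hF, Measure.volume_eq_prod, lintegral_prod]
  · rfl
  · exact (hF.comp (MeasurableEquiv.measurable _)).aemeasurable

lemma lint_prod_s3 {n : ℕ} (f : Fin n → ℝ → ENNReal) (hf : ∀ i, Measurable (f i)) :
    ∫⁻ z : Fin n → ℝ, ∏ j, f j (z j) = ∏ j, ∫⁻ t, f j t := by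
  induction n with
  | zero => simp [volume_pi]
  | succ n ih =>
    rw [lint_split 0 _ (by fun_prop)]
    simp only [Fin.prod_univ_succ, Fin.insertNth_zero, Fin.cons_zero, Fin.cons_succ]
    have : ∀ t, ∫⁻ z : Fin n → ℝ, f 0 t * ∏ j, f j.succ (z j) = f 0 t * ∏ j : Fin n, ∫⁻ t, f j.succ t := by
      intro t
      rw [lintegral_const_mul _ (by fun_prop), ih _ (fun i => hf _)]
    refine (lintegral_congr this).trans ?_
    rw [lintegral_mul_const _ (hf 0)]

noncomputable def GG {n : ℕ} (τ : ℝ) (β : Fin (n + 1) → ℝ) (i : Fin (n + 1)) :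
    (Fin (n + 1) → ℝ) → ENNReal :=
  {y | ∀ j, y j ≤ y i}.indicator fun y => ∏ j, gd τ (β j) (y j)

lemma meas_max {n : ℕ} (i : Fin (n + 1)) : MeasurableSet {y : Fin (n + 1) → ℝ | ∀ j, y j ≤ y i} := by
  rw [Set.ofPred_forall]
  exact MeasurableSet.iInter fun j => measurableSet_le (measurable_pi_apply j) (measurable_pi_apply i)

lemma GG_meas {n : ℕ} (τ : ℝ) (β : Fin (n + 1) → ℝ) (i : Fin (n + 1)) : Measurable (GG τ β i) := by
  unfold GG
  refine Measurable.indicator ?_ (meas_max i)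
  exact Finset.measurable_prod _ fun j _ => (gd_meas _ _).comp (measurable_pi_apply j)

open Set in
lemma J1 {n : ℕ} {τ : ℝ} (hτ : 0 < τ) (β : Fin (n + 1) → ℝ) (hβ : ∀ i, 0 < β i) (i : Fin (n + 1)) :
    ∫⁻ y, GG τ β i y = ENNReal.ofReal (β i / ∑ j, β j) := by
  have hB : 0 < ∑ j, β j := Finset.sum_pos (fun j _ => hβ j) Finset.univ_nonempty
  rw [lint_split i _ (GG_meas τ β i)]
  have h1 : ∀ t : ℝ, ∀ z : Fin n → ℝ, GG τ β i (i.insertNth t z) =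
      gd τ (β i) t * ∏ j, (Iic t).indicator (gd τ (β (i.succAbove j))) (z j) := by
    intro t z
    by_cases h : ∀ j, z j ≤ t
    · have hm : i.insertNth t z ∈ {y : Fin (n + 1) → ℝ | ∀ j, y j ≤ y i} := by
        simp only [mem_ofPred_eq, i.forall_iff_succAbove]
        simpa using h
      rw [GG, indicator_of_mem hm, Fin.prod_univ_succAbove _ i]
      simp only [Fin.insertNth_apply_same, Fin.insertNth_apply_succAbove]
      congr 1
      refine Finset.prod_congr rfl fun j _ => ?_
      rw [indicator_of_mem]
      exact h j
    · have hm : i.insertNth t z ∉ {y : Fin (n + 1) → ℝ | ∀ j, y j ≤ y i} := by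
        simp only [mem_ofPred_eq, i.forall_iff_succAbove]
        simpa using h
      rw [GG, indicator_of_notMem hm]
      push Not at h
      obtain ⟨j, hj⟩ := h
      rw [Finset.prod_eq_zero (Finset.mem_univ j), mul_zero]
      rw [indicator_of_notMem]
      simpa using hj
  have h2 : ∀ t : ℝ, ∫⁻ z : Fin n → ℝ, GG τ β i (i.insertNth t z) =
      (Ioi (0:ℝ)).indicator (fun t => ENNReal.ofReal (τ * t ^ (-τ - 1)) *
       (fun s => ENNReal.ofReal (β i / ∑ j, β j) *
          ENNReal.ofReal ((∑ j, β j) * Real.exp (-((∑ j, β j) * s)))) (t ^ (-τ))) t := by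
    intro t
    simp_rw [h1]
    have hm : ∀ j, Measurable ((Iic t).indicator (gd τ (β (i.succAbove j)))) :=
      fun j => (gd_meas _ _).indicator measurableSet_Iic
    rw [lintegral_const_mul _ (by fun_prop), lint_prod_s3 _ hm]
    by_cases ht : 0 < t
    · simp_rw [fun j => gd_Iic hτ (hβ (i.succAbove j)) ht]
      rw [← ENNReal.ofReal_prod_of_nonneg (fun _ _ => by positivity), ← Real.exp_sum]
      simp only [gd, indicator, Set.mem_Ioi, ht, if_true]
      rw [mul_assoc]
      congr 1
      have := hβ i
      rw [← ENNReal.ofReal_mul (by positivity), ← ENNReal.ofReal_mul (by positivity)]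
      congr 1
      rw [← mul_assoc, div_mul_cancel₀ _ hB.ne', mul_assoc, ← Real.exp_add]
      congr 2
      rw [Fin.sum_univ_succAbove _ i, Finset.sum_neg_distrib, ← Finset.sum_mul]
      ring
    · simp [gd, ht]
  rw [lintegral_congr h2]
  rw [lintegral_indicator measurableSet_Ioi, aux_cov hτ (fun s => ENNReal.ofReal (β i / ∑ j, β j) *
          ENNReal.ofReal ((∑ j, β j) * Real.exp (-((∑ j, β j) * s)))), lintegral_const_mul _ (by fun_prop),
    setLIntegral_congr Ioi_ae_eq_Ici, aux_exp hB]
  simp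

lemma fill_eq {n : ℕ} (u : Fin n → ℝ) :
    fillMap (n + 1) u = (Fin.last n).insertNth (α := fun _ => ℝ) (1 - ∑ j, u j) u := by
  funext j
  refine Fin.lastCases ?_ (fun k => ?_) j
  · rw [Fin.insertNth_apply_same]
    simp [fillMap]
  · rw [← Fin.succAbove_last_apply, Fin.insertNth_apply_succAbove]
    simp [fillMap]

lemma fill_meas {n : ℕ} : Measurable (fun u : Fin n → ℝ => fillMap (n + 1) u) := by
  refine measurable_pi_iff.2 fun j => ?_
  unfold fillMap
  by_cases h : (j : ℕ) < n + 1 - 1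
  · simp only [h, dite_true]
    exact measurable_pi_apply _
  · simp only [h, dite_false]
    fun_prop

open Set in
lemma J2 {n : ℕ} (F : (Fin (n + 1) → ℝ) → ENNReal) (hF : Measurable F)
    (h0 : ∀ y, ∑ j, y j ≤ 0 → F y = 0) :
    ∫⁻ y, F y = ∫⁻ v : Fin n → ℝ, ∫⁻ r in Ioi (0:ℝ),
      ENNReal.ofReal (r ^ n) * F (r • fillMap (n + 1) v) := by
  have hI : Measurable (fun p : ℝ × (Fin n → ℝ) => F ((Fin.last n).insertNth (α := fun _ => ℝ) p.1 p.2)) :=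
    hF.comp (MeasurableEquiv.piFinSuccAbove (fun _ : Fin (n + 1) => ℝ) (Fin.last n)).symm.measurable
  have hI2 : Measurable (fun p : ℝ × (Fin n → ℝ) =>
      F ((Fin.last n).insertNth (α := fun _ => ℝ) (p.1 - ∑ j, p.2 j) p.2)) :=
    hI.comp (f := fun p : ℝ × (Fin n → ℝ) => (p.1 - ∑ j, p.2 j, p.2)) (by fun_prop)
  have hfm := fill_meas (n := n)
  rw [lint_split (Fin.last n) F hF, lintegral_lintegral_swap hI.aemeasurable]
  have h1 : ∀ u : Fin n → ℝ, ∫⁻ t : ℝ, F ((Fin.last n).insertNth (α := fun _ => ℝ) t u) =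
      ∫⁻ r : ℝ, F ((Fin.last n).insertNth (α := fun _ => ℝ) (r - ∑ j, u j) u) := by
    intro u
    exact (lintegral_sub_right_eq_self
      (fun t => F ((Fin.last n).insertNth (α := fun _ => ℝ) t u)) (∑ j, u j)).symm
  simp_rw [h1]
  rw [← lintegral_lintegral_swap hI2.aemeasurable]
  have h2 : ∀ r : ℝ, ∫⁻ u : Fin n → ℝ, F ((Fin.last n).insertNth (α := fun _ => ℝ) (r - ∑ j, u j) u) =
      (Ioi (0:ℝ)).indicator (fun r => ∫⁻ v : Fin n → ℝ,
        ENNReal.ofReal (r ^ n) * F (r • fillMap (n + 1) v)) r := by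
    intro r
    by_cases hr : 0 < r
    · rw [indicator_of_mem (by exact hr)]
      have hFr : Measurable (fun v : Fin n → ℝ => F (r • fillMap (n + 1) v)) :=
        hF.comp (hfm.const_smul r)
      rw [lintegral_const_mul _ hFr]
      have hmap := Measure.map_addHaar_smul (volume : Measure (Fin n → ℝ)) hr.ne'
      have hpos : 0 < r ^ n := by positivity
      rw [Module.finrank_fin_fun, abs_of_pos (by positivity)] at hmap
      have hH : Measurable (fun u : Fin n → ℝ =>
          F ((Fin.last n).insertNth (α := fun _ => ℝ) (r - ∑ j, u j) u)) :=
        hI2.comp (f := fun u => (r, u)) (by fun_prop)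
      have h3 := lintegral_map (μ := (volume : Measure (Fin n → ℝ))) hH
        (g := fun v => r • v) (by fun_prop)
      rw [hmap, lintegral_smul_measure] at h3
      have h4 : ∀ v : Fin n → ℝ, F (r • fillMap (n + 1) v) =
          F ((Fin.last n).insertNth (α := fun _ => ℝ) (r - ∑ j, (r • v) j) (r • v)) := by
        intro v
        congr 1
        rw [fill_eq]
        funext j
        refine Fin.lastCases ?_ (fun k => ?_) j
        · simp only [Pi.smul_apply, Fin.insertNth_apply_same, smul_eq_mul, ← Finset.mul_sum]
          ring
        · rw [← Fin.succAbove_last_apply]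
          simp only [Pi.smul_apply, Fin.insertNth_apply_succAbove]
      simp_rw [h4]
      rw [← h3, smul_eq_mul, ← mul_assoc, ← ENNReal.ofReal_mul hpos.le, mul_inv_cancel₀ hpos.ne']
      simp
    · rw [indicator_of_notMem (by exact hr)]
      have : ∀ u : Fin n → ℝ, F ((Fin.last n).insertNth (α := fun _ => ℝ) (r - ∑ j, u j) u) = 0 := by
        intro u
        apply h0
        rw [Fin.sum_univ_succAbove _ (Fin.last n)]
        simp only [Fin.insertNth_apply_same, Fin.insertNth_apply_succAbove]
        linarith
      simp_rw [this]
      simp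
  simp_rw [h2]
  rw [lintegral_indicator measurableSet_Ioi, lintegral_lintegral_swap]
  have : Measurable (fun p : ℝ × (Fin n → ℝ) => p.1 • fillMap (n + 1) p.2) :=
    measurable_fst.smul (hfm.comp measurable_snd)
  have h5 := hF.comp this
  have h6 : Measurable (fun p : ℝ × (Fin n → ℝ) => ENNReal.ofReal (p.1 ^ n)) := by fun_prop
  exact (h6.mul h5).aemeasurable

open Set in
lemma radial {n : ℕ} {τ : ℝ} (hτ : 0 < τ) (β : Fin (n + 1) → ℝ) (hβ : ∀ i, 0 < β i)
    (i : Fin (n + 1)) (x : Fin (n + 1) → ℝ) :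
    ∫⁻ r in Ioi (0:ℝ), ENNReal.ofReal (r ^ n) * GG τ β i (r • x) =
      {x : Fin (n + 1) → ℝ | (∀ j, 0 ≤ x j) ∧ ∀ j, x j ≤ x i}.indicator
        (fun x => ENNReal.ofReal (concreteDensity (n + 1) β τ x)) x := by
  by_cases hpos : ∀ j, 0 < x j
  · by_cases hmax : ∀ j, x j ≤ x i
    · have hxm : x ∈ {x : Fin (n + 1) → ℝ | (∀ j, 0 ≤ x j) ∧ ∀ j, x j ≤ x i} :=
        ⟨fun j => (hpos j).le, hmax⟩
      rw [indicator_of_mem hxm]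
      set A : ℝ := ∑ j, β j / x j ^ τ with hAdef
      have hA : 0 < A := Finset.sum_pos
        (fun j _ => div_pos (hβ j) (Real.rpow_pos_of_pos (hpos j) _)) Finset.univ_nonempty
      set P : ℝ := ∏ j, β j / x j ^ (τ + 1) with hP
      have hP0 : 0 < P := Finset.prod_pos
        (fun j _ => div_pos (hβ j) (Real.rpow_pos_of_pos (hpos j) _))
      have h1 : ∀ r ∈ Ioi (0:ℝ), ENNReal.ofReal (r ^ n) * GG τ β i (r • x) =
          ENNReal.ofReal (τ * r ^ (-τ - 1)) *
           (fun s => ENNReal.ofReal (τ ^ n * P) *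
            ENNReal.ofReal (s ^ n * Real.exp (-(A * s)))) (r ^ (-τ)) := by
        intro r hr
        have hr : 0 < r := hr
        have hm : r • x ∈ {y : Fin (n + 1) → ℝ | ∀ j, y j ≤ y i} := fun j => by
          simpa using mul_le_mul_of_nonneg_left (hmax j) hr.le
        rw [GG, indicator_of_mem hm]
        have h2 : ∀ j, gd τ (β j) ((r • x) j) = ENNReal.ofReal
            ((τ * r ^ (-τ - 1)) * ((β j / x j ^ (τ + 1)) * Real.exp (-(β j / x j ^ τ * r ^ (-τ))))) := by
          intro j
          have hx := hpos j
          have := hβ j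
          rw [gd, indicator_of_mem (by simpa using mul_pos hr hx)]
          simp only [Pi.smul_apply, smul_eq_mul]
          rw [← ENNReal.ofReal_mul (by positivity), Real.mul_rpow hr.le hx.le,
            Real.mul_rpow hr.le hx.le, show -τ - 1 = -(τ + 1) by ring,
            Real.rpow_neg hx.le, Real.rpow_neg hx.le]
          congr 1
          rw [show β j / x j ^ τ * r ^ (-τ) = β j * (r ^ (-τ) * (x j ^ τ)⁻¹) by ring]
          ring
        simp_rw [h2]
        have hnn : ∀ j, 0 ≤ (τ * r ^ (-τ - 1)) *
            ((β j / x j ^ (τ + 1)) * Real.exp (-(β j / x j ^ τ * r ^ (-τ)))) := by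
          intro j
          have hx := hpos j
          have := hβ j
          positivity
        rw [← ENNReal.ofReal_prod_of_nonneg (fun j _ => hnn j),
          ← ENNReal.ofReal_mul (by positivity), ← ENNReal.ofReal_mul (by positivity),
          ← ENNReal.ofReal_mul (by positivity)]
        congr 1
        rw [Finset.prod_mul_distrib, Finset.prod_mul_distrib, Finset.prod_mul_distrib, ← Real.exp_sum, ← hP,
          Finset.sum_neg_distrib, ← Finset.sum_mul, ← hAdef]
        simp only [Finset.prod_const, Finset.card_univ, Fintype.card_fin]
        have h3 : r ^ (-τ - 1) * r = r ^ (-τ) := by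
          rw [Real.rpow_sub_one hr.ne']
          field_simp
        rw [← h3]
        ring
      rw [setLIntegral_congr_fun measurableSet_Ioi h1, aux_cov hτ (fun s => ENNReal.ofReal (τ ^ n * P) *
            ENNReal.ofReal (s ^ n * Real.exp (-(A * s)))),
        lintegral_const_mul _ (by fun_prop), aux_gamma hA, ← ENNReal.ofReal_mul (by positivity)]
      congr 1
      simp only [concreteDensity, ← hAdef, ← hP, Nat.add_sub_cancel]
      ring
    · rw [indicator_of_notMem (fun h => hmax h.2)]
      have : ∀ r ∈ Ioi (0:ℝ), ENNReal.ofReal (r ^ n) * GG τ β i (r • x) = 0 := by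
        intro r hr
        rw [GG, indicator_of_notMem, mul_zero]
        intro h
        exact hmax fun j => le_of_mul_le_mul_left (by simpa using h j) hr
      rw [setLIntegral_congr_fun measurableSet_Ioi this]
      simp
  · push Not at hpos
    obtain ⟨j, hj⟩ := hpos
    have h1 : ∀ r ∈ Ioi (0:ℝ), ENNReal.ofReal (r ^ n) * GG τ β i (r • x) = 0 := by
      intro r hr
      rw [GG, indicator_apply_eq_zero.2, mul_zero]
      intro _
      refine Finset.prod_eq_zero (Finset.mem_univ j) ?_
      rw [gd, indicator_of_notMem]
      simpa using mul_nonpos_of_nonneg_of_nonpos (le_of_lt hr) hj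
    rw [setLIntegral_congr_fun measurableSet_Ioi h1, lintegral_zero, eq_comm, indicator_apply_eq_zero]
    intro hx
    have h0 : x j = 0 := le_antisymm hj (hx.1 j)
    rw [concreteDensity, Finset.prod_eq_zero (Finset.mem_univ j)]
    · simp
    · rw [h0, Real.zero_rpow (by linarith), div_zero]

theorem concrete_rounding_probability
    (K : ℕ) (hK : 2 ≤ K) (τ : ℝ) (hτ : 0 < τ)
    (β : Fin K → ℝ) (hβ : ∀ i, 0 < β i) (i : Fin K) :
    ∫ x in {x : Fin K → ℝ | ∀ j, x j ≤ x i},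
        concreteDensity K β τ x ∂(simplexMeasure K)
      = β i / ∑ j, β j := by
  obtain ⟨n, rfl⟩ : ∃ n, K = n + 1 := ⟨K - 1, by omega⟩
  have hB : 0 < ∑ j, β j := Finset.sum_pos (fun j _ => hβ j) Finset.univ_nonempty
  have hfm := fill_meas (n := n)
  have hdm : Measurable (concreteDensity (n + 1) β τ) := by
    unfold concreteDensity
    fun_prop
  have hΔ : MeasurableSet {u : Fin n → ℝ | (∀ j, 0 ≤ u j) ∧ ∑ j, u j ≤ 1} := by
    rw [Set.ofPred_and, Set.ofPred_forall]
    exact (MeasurableSet.iInter fun j => measurableSet_le measurable_const (measurable_pi_apply j)).inter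
      (measurableSet_le (by fun_prop) measurable_const)
  have hnn : ∀ x : Fin (n + 1) → ℝ, (∀ j, 0 ≤ x j) → 0 ≤ concreteDensity (n + 1) β τ x := by
    intro x hx
    unfold concreteDensity
    have h1 : ∀ a : ℝ, ∀ j, 0 ≤ β j / x j ^ a := fun a j =>
      div_nonneg (hβ j).le (Real.rpow_nonneg (hx j) _)
    have h2 : 0 ≤ ∑ j, β j / x j ^ τ := Finset.sum_nonneg fun j _ => h1 τ j
    have h3 : 0 ≤ ∏ j, β j / x j ^ (τ + 1) := Finset.prod_nonneg fun j _ => h1 _ j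
    have h4 := Real.rpow_nonneg h2 (-((n + 1 : ℕ) : ℝ))
    positivity
  have hfill : ∀ u : Fin n → ℝ, (∀ j, 0 ≤ fillMap (n + 1) u j) ↔
      ((∀ j, 0 ≤ u j) ∧ ∑ j, u j ≤ 1) := by
    intro u
    rw [fill_eq, (Fin.last n).forall_iff_succAbove]
    simp only [Fin.insertNth_apply_same, Fin.insertNth_apply_succAbove, sub_nonneg]
    exact and_comm
  have hsm : simplexMeasure (n + 1) = Measure.map (fun u : Fin n → ℝ => fillMap (n + 1) u)
    (volume.restrict {u : Fin n → ℝ | (∀ j, 0 ≤ u j) ∧ ∑ j, u j ≤ 1}) := rfl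
  rw [integral_eq_lintegral_of_nonneg_ae]
  · rw [hsm, ← lintegral_indicator (meas_max i),
      lintegral_map (Measurable.indicator (by fun_prop) (meas_max i)) hfm,
      ← lintegral_indicator hΔ]
    have h1 := J1 hτ β hβ i
    rw [J2 _ (GG_meas τ β i)] at h1
    · simp_rw [radial hτ β hβ i] at h1
      have h2 : ∀ u : Fin n → ℝ,
          {u : Fin n → ℝ | (∀ j, 0 ≤ u j) ∧ ∑ j, u j ≤ 1}.indicator (fun u =>
            {x : Fin (n + 1) → ℝ | ∀ j, x j ≤ x i}.indicator
              (fun x => ENNReal.ofReal (concreteDensity (n + 1) β τ x)) (fillMap (n + 1) u)) u =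
          {x : Fin (n + 1) → ℝ | (∀ j, 0 ≤ x j) ∧ ∀ j, x j ≤ x i}.indicator
            (fun x => ENNReal.ofReal (concreteDensity (n + 1) β τ x)) (fillMap (n + 1) u) := by
        intro u
        simp only [Set.indicator, Set.mem_ofPred_eq, hfill, ite_and]
      simp_rw [h2]
      rw [h1, ENNReal.toReal_ofReal (div_pos (hβ i) hB).le]
    · intro y hy
      have : ∃ j, y j ≤ 0 := by
        by_contra hc
        push Not at hc
        exact absurd (Finset.sum_pos (fun j _ => hc j) Finset.univ_nonempty) (not_lt.2 hy)
      obtain ⟨j, hj⟩ := this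
      rw [GG, Set.indicator_apply_eq_zero]
      intro _
      refine Finset.prod_eq_zero (Finset.mem_univ j) ?_
      rw [gd, Set.indicator_of_notMem]
      simpa using hj
  · apply ae_restrict_of_ae
    rw [hsm]
    refine (ae_map_iff hfm.aemeasurable (measurableSet_le measurable_const hdm)).2 ?_
    filter_upwards [ae_restrict_mem hΔ] with u hu
    exact hnn _ ((hfill u).2 hu)
  · exact hdm.aestronglyMeasurable
end

section
/- Let K ≥ 2, τ > 0, and β ∈ ℝ^K with all β_i > 0, and let X have the Concrete distribution C(β, τ). Then for all indices i, k, the log-ratio mean satisfies E[log(X_i/X_k)] = (1/τ) log(β_i/β_k). -/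
open MeasureTheory Finset

noncomputable def cG (b τ t : ℝ) : ℝ := (|-τ| * t ^ (-τ - 1)) * (b * Real.exp (-(b * t ^ (-τ))))

lemma cG_zero (b τ : ℝ) (hτ : 0 < τ) : cG b τ 0 = 0 := by
  have : -τ - 1 ≠ 0 := by linarith
  simp [cG, Real.zero_rpow this]

lemma cG_measurable (b τ : ℝ) : Measurable (cG b τ) := by
  unfold cG
  fun_prop

lemma intLogExp : IntegrableOn (fun w : ℝ => Real.log w * Real.exp (-w)) (Set.Ioi 0) := by
  have h1 := (Real.GammaIntegral_convergent (s := 2) (by norm_num))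
  have h2 := (Real.GammaIntegral_convergent (s := 1 / 2) (by norm_num)).const_mul 2
  refine Integrable.mono' (h1.add h2) ?_ ?_
  · exact (Measurable.aestronglyMeasurable (by fun_prop))
  · refine (ae_restrict_iff' measurableSet_Ioi).2 (ae_of_all _ fun w hw => ?_)
    have hw : (0 : ℝ) < w := hw
    have e1 : Real.log w ≤ w := (Real.log_le_sub_one_of_pos hw).trans (by linarith)
    have e2 := Real.log_le_rpow_div (inv_pos.2 hw).le (ε := 1 / 2) (by norm_num)
    rw [Real.log_inv, Real.inv_rpow hw.le, ← Real.rpow_neg hw.le] at e2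
    have e3 : |Real.log w| ≤ w + 2 * w ^ (-(1 / 2) : ℝ) := by
      have := Real.rpow_pos_of_pos hw (-(1 / 2))
      rw [abs_le]; constructor <;> linarith
    have e4 := mul_le_mul_of_nonneg_right e3 (Real.exp_pos (-w)).le
    simp only [Pi.add_apply, norm_mul, Real.norm_eq_abs, Real.abs_exp]
    norm_num at e4 ⊢
    linarith

lemma intExp (b : ℝ) (hb : 0 < b) :
    IntegrableOn (fun w : ℝ => b * Real.exp (-(b * w))) (Set.Ioi 0) := by
  have h0 : IntegrableOn (fun w : ℝ => Real.exp (-w)) (Set.Ioi 0) := by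
    simpa using (Real.GammaIntegral_convergent (s := 1) (by norm_num))
  exact ((integrableOn_Ioi_comp_mul_left_iff (fun w : ℝ => Real.exp (-w)) 0 hb).2
    (by simpa using h0)).const_mul b

lemma integralExp (b : ℝ) (hb : 0 < b) :
    ∫ w in Set.Ioi (0 : ℝ), b * Real.exp (-(b * w)) = 1 := by
  rw [integral_const_mul, integral_comp_mul_left_Ioi (fun w : ℝ => Real.exp (-w)) 0 hb]
  rw [mul_zero, integral_exp_neg_Ioi_zero, smul_eq_mul, mul_one, mul_inv_cancel₀ hb.ne']

lemma intLogExpB (b : ℝ) (hb : 0 < b) :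
    IntegrableOn (fun w : ℝ => Real.log w * (b * Real.exp (-(b * w)))) (Set.Ioi 0) ∧
    ∫ w in Set.Ioi (0 : ℝ), Real.log w * (b * Real.exp (-(b * w))) =
      (∫ w in Set.Ioi (0 : ℝ), Real.log w * Real.exp (-w)) - Real.log b := by
  have h1 : IntegrableOn (fun w : ℝ => b * (Real.log (b * w) * Real.exp (-(b * w)))) (Set.Ioi 0) :=
    ((integrableOn_Ioi_comp_mul_left_iff (fun w : ℝ => Real.log w * Real.exp (-w)) 0 hb).2
      (by simpa using intLogExp)).const_mul b
  have h2 := (intExp b hb).const_mul (Real.log b)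
  have e : Set.EqOn (fun w : ℝ => Real.log w * (b * Real.exp (-(b * w))))
      (fun w => b * (Real.log (b * w) * Real.exp (-(b * w))) -
        Real.log b * (b * Real.exp (-(b * w)))) (Set.Ioi 0) := by
    intro w hw
    have hw : (0 : ℝ) < w := hw
    simp only [Real.log_mul hb.ne' hw.ne']
    ring
  refine ⟨(integrableOn_congr_fun e measurableSet_Ioi).2 (h1.sub h2), ?_⟩
  rw [setIntegral_congr_fun measurableSet_Ioi e, integral_sub h1 h2, integral_const_mul,
    integral_const_mul, integralExp b hb,
    integral_comp_mul_left_Ioi (fun w : ℝ => Real.log w * Real.exp (-w)) 0 hb]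
  simp [hb.ne']

lemma cG_int (b τ : ℝ) (hb : 0 < b) (hτ : 0 < τ) :
    IntegrableOn (cG b τ) (Set.Ioi 0) ∧ ∫ t in Set.Ioi (0 : ℝ), cG b τ t = 1 := by
  have hp : -τ ≠ 0 := by linarith
  refine ⟨(integrableOn_Ioi_comp_rpow_iff (fun w => b * Real.exp (-(b * w))) hp).2 (intExp b hb), ?_⟩
  rw [← integralExp b hb]
  exact integral_comp_rpow_Ioi (fun w => b * Real.exp (-(b * w))) hp

lemma cG_log (b τ : ℝ) (hb : 0 < b) (hτ : 0 < τ) :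
    IntegrableOn (fun t => Real.log t * cG b τ t) (Set.Ioi 0) ∧
    ∫ t in Set.Ioi (0 : ℝ), Real.log t * cG b τ t =
      (1 / τ) * Real.log b - (1 / τ) * ∫ w in Set.Ioi (0 : ℝ), Real.log w * Real.exp (-w) := by
  have hp : -τ ≠ 0 := by linarith
  obtain ⟨h1, h2⟩ := intLogExpB b hb
  have k1 := (integrableOn_Ioi_comp_rpow_iff _ hp).2 h1
  have k2 := integral_comp_rpow_Ioi (fun w : ℝ => Real.log w * (b * Real.exp (-(b * w)))) hp
  have e : Set.EqOn (fun t => Real.log t * cG b τ t) (fun t : ℝ => (-(1 / τ)) *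
      ((|-τ| * t ^ (-τ - 1)) • (Real.log (t ^ (-τ)) * (b * Real.exp (-(b * t ^ (-τ)))))))
      (Set.Ioi 0) := by
    intro w hw
    have hw : (0 : ℝ) < w := hw
    simp only [Real.log_rpow hw, cG, smul_eq_mul]
    field_simp
  refine ⟨(integrableOn_congr_fun e measurableSet_Ioi).2 (k1.const_mul _), ?_⟩
  rw [setIntegral_congr_fun measurableSet_Ioi e, integral_const_mul, k2, h2]
  ring

/-- measure on the orthant -/
noncomputable def orth (n : ℕ) : Measure (Fin n → ℝ) :=
  Measure.pi (fun _ => volume.restrict (Set.Ioi (0 : ℝ)))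

noncomputable def cH {n : ℕ} (β : Fin n → ℝ) (τ : ℝ) (i k : Fin n) (r : Fin n → ℝ) : ℝ :=
  Real.log (r i / r k) * ∏ j, cG (β j) τ (r j)

lemma cH_measurable {n : ℕ} (β : Fin n → ℝ) (τ : ℝ) (i k : Fin n) : Measurable (cH β τ i k) := by
  unfold cH
  have := fun j => cG_measurable (β j) τ
  fun_prop

lemma orth_log {n : ℕ} (β : Fin n → ℝ) (hβ : ∀ i, 0 < β i) (τ : ℝ) (hτ : 0 < τ) (i : Fin n) :
    Integrable (fun r : Fin n → ℝ => Real.log (r i) * ∏ j, cG (β j) τ (r j)) (orth n) ∧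
    ∫ r, Real.log (r i) * ∏ j, cG (β j) τ (r j) ∂(orth n) =
      (1 / τ) * Real.log (β i) - (1 / τ) * ∫ w in Set.Ioi (0 : ℝ), Real.log w * Real.exp (-w) := by
  let f : Fin n → ℝ → ℝ := fun j t => (if j = i then Real.log t else 1) * cG (β j) τ t
  have e : (fun r : Fin n → ℝ => Real.log (r i) * ∏ j, cG (β j) τ (r j)) =
      fun r => ∏ j, f j (r j) := by
    funext r
    simp only [f, Finset.prod_mul_distrib]
    simp
  rw [e]
  refine ⟨?_, ?_⟩
  · refine Integrable.fintype_prod_dep fun j => ?_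
    by_cases h : j = i
    · simpa [f, h, IntegrableOn] using (cG_log (β i) τ (hβ i) hτ).1
    · simp only [f, h, if_false, one_mul]
      exact (cG_int (β j) τ (hβ j) hτ).1
  · unfold orth
    rw [integral_fintype_prod_eq_prod, Finset.prod_eq_single i]
    · simpa [f] using (cG_log (β i) τ (hβ i) hτ).2
    · intro j _ h
      simpa [f, h] using (cG_int (β j) τ (hβ j) hτ).2
    · simp

lemma orth_H {n : ℕ} (β : Fin n → ℝ) (hβ : ∀ i, 0 < β i) (τ : ℝ) (hτ : 0 < τ) (i k : Fin n) :
    Integrable (cH β τ i k) (orth n) ∧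
    ∫ r, cH β τ i k r ∂(orth n) = (1 / τ) * Real.log (β i / β k) := by
  obtain ⟨a1, a2⟩ := orth_log β hβ τ hτ i
  obtain ⟨b1, b2⟩ := orth_log β hβ τ hτ k
  have e : cH β τ i k = fun r => Real.log (r i) * ∏ j, cG (β j) τ (r j) -
      Real.log (r k) * ∏ j, cG (β j) τ (r j) := by
    funext r
    unfold cH
    by_cases h : ∃ j, r j = 0
    · obtain ⟨j, hj⟩ := h
      have : ∏ j, cG (β j) τ (r j) = 0 :=
        Finset.prod_eq_zero (Finset.mem_univ j) (by rw [hj, cG_zero _ _ hτ])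
      simp [this]
    · push Not at h
      rw [Real.log_div (h i) (h k)]
      ring
  rw [e]
  refine ⟨a1.sub b1, ?_⟩
  rw [integral_sub a1 b1, a2, b2, Real.log_div (hβ i).ne' (hβ k).ne']
  ring

lemma fill_last {n : ℕ} (u : Fin n → ℝ) : fillMap (n + 1) u (Fin.last n) = 1 - ∑ j, u j := by
  simp [fillMap]

lemma fill_castSucc {n : ℕ} (u : Fin n → ℝ) (j : Fin n) :
    fillMap (n + 1) u j.castSucc = u j := by
  simp [fillMap]

lemma fill_measurable (n : ℕ) : Measurable (fun u : Fin n → ℝ => fillMap (n + 1) u) := by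
  refine measurable_pi_iff.2 fun i => ?_
  refine Fin.lastCases ?_ (fun j => ?_) i
  · simp only [fill_last]; fun_prop
  · simp only [fill_castSucc]; fun_prop

noncomputable def sn {n : ℕ} (v : Fin n → ℝ) (t : ℝ) : Fin (n + 1) → ℝ :=
  (MeasurableEquiv.piFinSuccAbove (fun _ => ℝ) (Fin.last n)).symm (t, v)

lemma sn_last {n : ℕ} (v : Fin n → ℝ) (t : ℝ) : sn v t (Fin.last n) = t := by
  simp [sn, MeasurableEquiv.piFinSuccAbove]

lemma sn_castSucc {n : ℕ} (v : Fin n → ℝ) (t : ℝ) (j : Fin n) : sn v t j.castSucc = v j := by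
  simp [sn, MeasurableEquiv.piFinSuccAbove]

lemma sn_measurable (n : ℕ) : Measurable (fun p : ℝ × (Fin n → ℝ) => sn p.2 p.1) :=
  (MeasurableEquiv.piFinSuccAbove (fun _ => ℝ) (Fin.last n)).symm.measurable

lemma smul_fill {n : ℕ} (s : ℝ) (u : Fin n → ℝ) :
    s • fillMap (n + 1) u = sn (s • u) (s - ∑ j, (s • u) j) := by
  funext i
  refine Fin.lastCases ?_ (fun j => ?_) i
  · rw [sn_last, Pi.smul_apply, fill_last]
    simp [mul_sub, Finset.mul_sum]
  · rw [sn_castSucc, Pi.smul_apply, fill_castSucc]; rfl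

lemma orth_eq (n : ℕ) : orth n = (volume : Measure (Fin n → ℝ)).restrict {r | ∀ j, 0 ≤ r j} := by
  have : {r : Fin n → ℝ | ∀ j, 0 ≤ r j} = Set.univ.pi (fun _ => Set.Ici (0 : ℝ)) := by
    ext r; simp only [Set.mem_ofPred_eq, Set.mem_pi, Set.mem_univ, Set.mem_Ici, forall_true_left]
  rw [this, volume_pi, Measure.restrict_pi_pi, orth]
  congr 1
  funext _
  exact Measure.restrict_congr_set Ioi_ae_eq_Ici

noncomputable def rad (n : ℕ) : Measure ℝ :=
  (volume.restrict (Set.Ioi (0 : ℝ))).withDensity (fun s => ENNReal.ofReal (s ^ n))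

instance (n : ℕ) : SFinite (rad n) := by unfold rad; infer_instance

def smplxSet (n : ℕ) : Set (Fin n → ℝ) := {u | (∀ j, 0 ≤ u j) ∧ ∑ j, u j ≤ 1}

lemma smplxSet_meas (n : ℕ) : MeasurableSet (smplxSet n) := by
  unfold smplxSet
  measurability

lemma scale_lintegral {n : ℕ} (s : ℝ) (hs : 0 < s) (f : (Fin n → ℝ) → ENNReal) (hf : Measurable f) :
    ∫⁻ v, f v = ENNReal.ofReal (s ^ n) * ∫⁻ u, f (s • u) := by
  have h := Measure.map_addHaar_smul (volume : Measure (Fin n → ℝ)) hs.ne'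
  have h2 : ∫⁻ u, f (s • u) = ∫⁻ v, f v ∂(Measure.map (fun x => s • x) volume) :=
    (lintegral_map hf (by fun_prop)).symm
  rw [h2, h, lintegral_smul_measure, smul_eq_mul, ← mul_assoc, ← ENNReal.ofReal_mul (by positivity)]
  have : s ^ n * |(s ^ Module.finrank ℝ (Fin n → ℝ))⁻¹| = 1 := by
    rw [Module.finrank_fin_fun, abs_of_pos (by positivity)]
    exact mul_inv_cancel₀ (by positivity)
  rw [this]; simp

lemma polar_s6 (n : ℕ) :
    MeasurePreserving (fun p : (Fin n → ℝ) × ℝ => p.2 • fillMap (n + 1) p.1)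
      ((volume.restrict (smplxSet n)).prod (rad n)) (orth (n + 1)) := by
  have hm : Measurable (fun p : (Fin n → ℝ) × ℝ => p.2 • fillMap (n + 1) p.1) := by
    have := fill_measurable n
    exact measurable_snd.smul (this.comp measurable_fst)
  refine ⟨hm, ?_⟩
  refine Measure.ext_of_lintegral _ fun F hF => ?_
  have hΩ : MeasurableSet {r : Fin (n + 1) → ℝ | ∀ j, 0 ≤ r j} := by measurability
  rw [lintegral_map hF hm, orth_eq, ← lintegral_indicator hΩ]
  set F' := Set.indicator {r : Fin (n + 1) → ℝ | ∀ j, 0 ≤ r j} F with hF'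
  have mF' : Measurable F' := hF.indicator hΩ
  have mG : Measurable (fun p : (Fin n → ℝ) × ℝ => F' (sn p.1 (p.2 - ∑ j, p.1 j))) := by
    refine mF'.comp ((sn_measurable n).comp (Measurable.prodMk ?_ measurable_fst))
    fun_prop
  have hR : ∫⁻ r, F' r = ∫⁻ s, ∫⁻ v : Fin n → ℝ, F' (sn v (s - ∑ j, v j)) := by
    have mp := (volume_preserving_piFinSuccAbove (fun _ : Fin (n + 1) => ℝ) (Fin.last n)).symm
    rw [← mp.lintegral_comp mF', Measure.volume_eq_prod, lintegral_prod_symm]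
    · rw [lintegral_lintegral_swap (f := fun (s : ℝ) (v : Fin n → ℝ) => F' (sn v (s - ∑ j, v j)))]
      · refine lintegral_congr fun v => ?_
        exact (lintegral_sub_right_eq_self (fun t => F' (sn v t)) (∑ j, v j)).symm
      · exact (mG.comp measurable_swap).aemeasurable
    · exact (mF'.comp (sn_measurable n)).aemeasurable
  have hR2 : ∫⁻ s, ∫⁻ v : Fin n → ℝ, F' (sn v (s - ∑ j, v j)) =
      ∫⁻ s in Set.Ioi (0 : ℝ), ∫⁻ v : Fin n → ℝ, F' (sn v (s - ∑ j, v j)) := by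
    rw [Measure.restrict_congr_set Ioi_ae_eq_Ici]
    refine (setLIntegral_eq_of_support_subset ?_).symm
    intro s hs
    by_contra hneg
    apply hs
    have hneg : s < 0 := by simpa using hneg
    simp only
    rw [← lintegral_zero (μ := (volume : Measure (Fin n → ℝ)))]
    refine lintegral_congr fun v => ?_
    refine Set.indicator_of_notMem ?_ _
    intro h
    have h1 := h (Fin.last n)
    rw [sn_last] at h1
    have h2 : 0 ≤ ∑ j, v j := Finset.sum_nonneg fun j _ => by
      have := h j.castSucc
      rwa [sn_castSucc] at this
    linarith
  rw [hR, hR2, lintegral_prod_symm (fun p : (Fin n → ℝ) × ℝ => F (p.2 • fillMap (n + 1) p.1))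
      (hF.comp hm).aemeasurable, rad,
    lintegral_withDensity_eq_lintegral_mul _ (by fun_prop)]
  · refine setLIntegral_congr_fun measurableSet_Ioi fun s hs => ?_
    have hs : (0 : ℝ) < s := hs
    simp only [Pi.mul_apply]
    rw [scale_lintegral s hs (fun v => F' (sn v (s - ∑ j, v j)))
      (mG.comp (measurable_id.prodMk measurable_const)),
      ← lintegral_indicator (smplxSet_meas n)]
    congr 1
    refine lintegral_congr fun u => ?_
    rw [← smul_fill, hF']
    have : u ∈ smplxSet n ↔ s • fillMap (n + 1) u ∈ {r : Fin (n + 1) → ℝ | ∀ j, 0 ≤ r j} := by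
      simp only [smplxSet, Set.mem_ofPred_eq, Pi.smul_apply, smul_eq_mul, mul_nonneg_iff_of_pos_left hs]
      rw [Fin.forall_fin_succ']
      simp only [fill_castSucc, fill_last, sub_nonneg]
    by_cases h : u ∈ smplxSet n
    · rw [Set.indicator_of_mem h, Set.indicator_of_mem (this.1 h)]
    · rw [Set.indicator_of_notMem h, Set.indicator_of_notMem (fun h' => h (this.2 h'))]
  · exact Measurable.lintegral_prod_left' (hF.comp hm)

lemma radial_int {n : ℕ} (β : Fin (n + 1) → ℝ) (hβ : ∀ i, 0 < β i) (τ : ℝ) (hτ : 0 < τ)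
    (i k : Fin (n + 1)) (x : Fin (n + 1) → ℝ) (hx : ∀ j, 0 ≤ x j) :
    ∫ s, cH β τ i k (s • x) ∂(rad n) = Real.log (x i / x k) * concreteDensity (n + 1) β τ x := by
  rw [rad, integral_withDensity_eq_integral_toReal_smul (by fun_prop) (by simp)]
  by_cases h0 : ∃ j, x j = 0
  · obtain ⟨j, hj⟩ := h0
    have e1 : ∀ s : ℝ, cH β τ i k (s • x) = 0 := fun s => by
      unfold cH
      rw [Finset.prod_eq_zero (Finset.mem_univ j) (by simp [hj, cG_zero _ _ hτ]), mul_zero]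
    have e2 : concreteDensity (n + 1) β τ x = 0 := by
      unfold concreteDensity
      have : τ + 1 ≠ 0 := by linarith
      rw [Finset.prod_eq_zero (Finset.mem_univ j) (by simp [hj, Real.zero_rpow this]), mul_zero]
    simp [e1, e2]
  push Not at h0
  have hx : ∀ j, 0 < x j := fun j => lt_of_le_of_ne (hx j) (h0 j).symm
  set A := ∑ j, β j / x j ^ τ with hA
  have hApos : 0 < A := Finset.sum_pos (fun j _ => div_pos (hβ j) (Real.rpow_pos_of_pos (hx j) _))
    Finset.univ_nonempty
  set P := ∏ j, β j / x j ^ (τ + 1) with hP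
  have key : Set.EqOn (fun s : ℝ => (ENNReal.ofReal (s ^ n)).toReal • cH β τ i k (s • x))
      (fun s : ℝ => (Real.log (x i / x k) * τ ^ n * P) * ((|-τ| * s ^ (-τ - 1)) •
        (fun w : ℝ => w ^ (((n : ℝ) + 1) - 1) * Real.exp (-(A * w))) (s ^ (-τ)))) (Set.Ioi 0) := by
    intro s hs
    have hs : (0 : ℝ) < s := hs
    have q1 : ∏ j, cG (β j) τ (s * x j) =
        τ ^ (n + 1) * (s ^ (-τ - 1)) ^ (n + 1) * P * Real.exp (-(A * s ^ (-τ))) := by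
      have : ∀ j, cG (β j) τ (s * x j) = τ * s ^ (-τ - 1) * (β j / x j ^ (τ + 1)) *
          Real.exp (-(β j / x j ^ τ * s ^ (-τ))) := fun j => by
        unfold cG
        rw [Real.mul_rpow hs.le (hx j).le, Real.mul_rpow hs.le (hx j).le, abs_neg, abs_of_pos hτ,
          show -τ - 1 = -(τ + 1) by ring, Real.rpow_neg (hx j).le, Real.rpow_neg (hx j).le]
        rw [show β j * (s ^ (-τ) * (x j ^ τ)⁻¹) = β j / x j ^ τ * s ^ (-τ) by ring]
        ring
      simp only [this]
      rw [Finset.prod_mul_distrib, Finset.prod_mul_distrib, ← Real.exp_sum, hP, hA,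
        Finset.sum_neg_distrib, Finset.sum_mul]
      simp [mul_pow]
    have q2 : s ^ n * (s ^ (-τ - 1)) ^ (n + 1) = s ^ (-τ - 1) * (s ^ (-τ)) ^ n := by
      rw [Real.rpow_sub_one hs.ne', div_pow]
      field_simp
      ring
    simp only [cH, Pi.smul_apply, smul_eq_mul]
    rw [q1, mul_div_mul_left _ _ hs.ne', ENNReal.toReal_ofReal (by positivity), add_sub_cancel_right,
      Real.rpow_natCast, abs_neg, abs_of_pos hτ]
    linear_combination (Real.log (x i / x k) * τ ^ (n + 1) * P * Real.exp (-(A * s ^ (-τ)))) * q2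
  rw [setIntegral_congr_fun measurableSet_Ioi key, integral_const_mul,
    integral_comp_rpow_Ioi (fun w : ℝ => w ^ (((n : ℝ) + 1) - 1) * Real.exp (-(A * w)))
      (by linarith : -τ ≠ 0),
    Real.integral_rpow_mul_exp_neg_mul_Ioi (by positivity) hApos, Real.Gamma_nat_eq_factorial]
  unfold concreteDensity
  rw [← hA, ← hP, one_div, Real.inv_rpow hApos.le, ← Real.rpow_neg hApos.le]
  simp only [Nat.add_sub_cancel]
  push_cast
  ring

/-- Log-ratio means of the Concrete distribution:
`E[log(X_i/X_k)] = (1/τ) log(β_i/β_k)`. -/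
theorem concrete_log_ratio_mean
    (K : ℕ) (hK : 2 ≤ K) (τ : ℝ) (hτ : 0 < τ)
    (β : Fin K → ℝ) (hβ : ∀ i, 0 < β i) (i k : Fin K) :
    ∫ x, Real.log (x i / x k) * concreteDensity K β τ x ∂(simplexMeasure K)
      = (1 / τ) * Real.log (β i / β k) := by
  obtain ⟨n, rfl⟩ : ∃ n, K = n + 1 := ⟨K - 1, by omega⟩
  obtain ⟨h1, h2⟩ := orth_H β hβ τ hτ i k
  have mp := polar_s6 n
  have hmeas : Measurable (fun x : Fin (n + 1) → ℝ =>
      Real.log (x i / x k) * concreteDensity (n + 1) β τ x) := by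
    unfold concreteDensity
    fun_prop
  rw [← h2, ← mp.map_eq, integral_map mp.measurable.aemeasurable
    (cH_measurable β τ i k).aestronglyMeasurable]
  have hint : Integrable (fun p : (Fin n → ℝ) × ℝ => cH β τ i k (p.2 • fillMap (n + 1) p.1))
      ((volume.restrict (smplxSet n)).prod (rad n)) := mp.integrable_comp_of_integrable h1
  rw [integral_prod _ hint]
  unfold simplexMeasure
  rw [integral_map (fill_measurable n).aemeasurable hmeas.aestronglyMeasurable]
  refine setIntegral_congr_fun (smplxSet_meas n) fun u hu => ?_
  refine (radial_int β hβ τ hτ i k (fillMap (n + 1) u) ?_).symm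
  rw [Fin.forall_fin_succ']
  simp only [fill_castSucc, fill_last, sub_nonneg]
  exact hu
end

section
/- Let K ≥ 2, τ > 0, α ∈ ℝ^K with all α_i > 0, and β ∈ ℝ^K with all β_i > 0, and let X have the inverse Schlömilch distribution IS(α, β, τ). Then for all indices i, j, k, l, the log-ratio covariance satisfies Cov[log(X_i/X_k), log(X_j/X_l)] = (1/τ²)[(δ_{ij} − δ_{il}) ψ'(α_i) − (δ_{kj} − δ_{kl}) ψ'(α_k)], where ψ' is the trigamma function and δ is the Kronecker delta. -/
open MeasureTheory Finset

/-- The density of the inverse Schlömilch distribution `IS(α, β, τ)` on the simplex. -/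
noncomputable def isDensity (K : ℕ) (α β : Fin K → ℝ) (τ : ℝ) (x : Fin K → ℝ) : ℝ :=
  τ ^ (K - 1) * Real.Gamma (∑ i, α i) * (∑ j, β j / x j ^ τ) ^ (-(∑ i, α i)) *
    ∏ i, β i ^ (α i) / (Real.Gamma (α i) * x i ^ (τ * α i + 1))

/-- The digamma function `ψ = Γ'/Γ`. -/
noncomputable def digamma (x : ℝ) : ℝ := deriv Real.Gamma x / Real.Gamma x

/-- The trigamma function `ψ'`, the derivative of the digamma function. -/
noncomputable def trigamma (x : ℝ) : ℝ := deriv digamma x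

/-- Kronecker delta. -/
def kd {K : ℕ} (a b : Fin K) : ℝ := if a = b then 1 else 0


open ProbabilityTheory

/-- density of the log of a Gamma variable -/
noncomputable def lgd (a w : ℝ) : ℝ := Real.exp (a * w - Real.exp w) / Real.Gamma a

lemma lgd_exp_integral (A S : ℝ) (hA : 0 < A) (hS : 0 < S) :
    ∫ t, Real.exp (A * t - S * Real.exp t) = Real.Gamma A * S ^ (-A) := by
  have h := integral_image_eq_integral_abs_deriv_smul (f := Real.exp) (f' := Real.exp)
    MeasurableSet.univ (fun x _ => (Real.hasDerivAt_exp x).hasDerivWithinAt)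
    (fun x _ y _ hxy => Real.exp_injective hxy)
    (fun t => t ^ (A - 1) * Real.exp (-(S * t)))
  rw [Set.image_univ, Real.range_exp, Real.integral_rpow_mul_exp_neg_mul_Ioi hA hS] at h
  rw [Measure.restrict_univ] at h
  rw [Real.rpow_neg hS.le, ← Real.inv_rpow hS.le, mul_comm, ← one_div, h]
  congr 1
  ext t
  rw [abs_of_pos (Real.exp_pos _), ← Real.exp_mul, smul_eq_mul, ← Real.exp_add, ← Real.exp_add]
  congr 1
  ring

lemma lgd_exp_integrable (A S : ℝ) (hA : 0 < A) (hS : 0 < S) :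
    Integrable fun t => Real.exp (A * t - S * Real.exp t) := by
  by_contra h
  have h1 := lgd_exp_integral A S hA hS
  rw [integral_undef h] at h1
  have := Real.Gamma_pos_of_pos hA
  have : 0 < Real.Gamma A * S ^ (-A) := by positivity
  linarith

lemma lgd_pos {a : ℝ} (ha : 0 < a) (w : ℝ) : 0 < lgd a w :=
  div_pos (Real.exp_pos _) (Real.Gamma_pos_of_pos ha)

lemma lgd_measurable (a : ℝ) : Measurable (lgd a) := by
  unfold lgd; fun_prop

lemma lgd_integrable {a : ℝ} (ha : 0 < a) : Integrable (lgd a) := by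
  have := (lgd_exp_integrable a 1 ha one_pos).div_const (Real.Gamma a)
  simpa [lgd] using! this

lemma lgd_integral {a : ℝ} (ha : 0 < a) : ∫ w, lgd a w = 1 := by
  have := lgd_exp_integral a 1 ha one_pos
  simp only [one_mul, Real.one_rpow, mul_one] at this
  simp only [lgd]
  rw [integral_div, this, div_self (Real.Gamma_pos_of_pos ha).ne']

/-- law of the log of a Gamma variable -/
noncomputable def lgm (a : ℝ) : Measure ℝ := volume.withDensity fun w => ENNReal.ofReal (lgd a w)

lemma lgm_prob {a : ℝ} (ha : 0 < a) : IsProbabilityMeasure (lgm a) := by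
  constructor
  rw [lgm, withDensity_apply _ MeasurableSet.univ, Measure.restrict_univ,
    ← ofReal_integral_eq_lintegral_ofReal (lgd_integrable ha)
      (ae_of_all _ fun w => (lgd_pos ha w).le), lgd_integral ha, ENNReal.ofReal_one]

lemma lgm_integrable {a : ℝ} (ha : 0 < a) (g : ℝ → ℝ) :
    Integrable g (lgm a) ↔ Integrable (fun w => lgd a w * g w) := by
  rw [lgm, integrable_withDensity_iff_integrable_smul₀']
  · simp only [ENNReal.toReal_ofReal (lgd_pos ha _).le, smul_eq_mul]
  · exact (lgd_measurable a).ennreal_ofReal.aemeasurable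
  · simp

lemma lgm_integral {a : ℝ} (ha : 0 < a) (g : ℝ → ℝ) :
    ∫ w, g w ∂(lgm a) = ∫ w, lgd a w * g w := by
  rw [lgm, integral_withDensity_eq_integral_toReal_smul]
  · simp only [ENNReal.toReal_ofReal (lgd_pos ha _).le, smul_eq_mul]
  · exact (lgd_measurable a).ennreal_ofReal
  · simp

lemma lgm_set {a : ℝ} (ha : 0 < a) : Set.Ioi (-a) ⊆ integrableExpSet id (lgm a) := by
  intro t ht
  have h : 0 < a + t := by simp at ht; linarith
  simp only [integrableExpSet, Set.mem_ofPred_eq, lgm_integrable ha, id]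
  have := (lgd_exp_integrable (a + t) 1 h one_pos).div_const (Real.Gamma a)
  refine this.congr (ae_of_all _ fun w => ?_)
  simp only [lgd]
  rw [div_mul_eq_mul_div, ← Real.exp_add]
  ring_nf

lemma lgm_mem {a : ℝ} (ha : 0 < a) : 0 ∈ interior (integrableExpSet id (lgm a)) := by
  rw [mem_interior]
  exact ⟨_, lgm_set ha, isOpen_Ioi, by simpa using ha⟩

lemma lgm_memLp {a : ℝ} (ha : 0 < a) : MemLp id 2 (lgm a) := by
  simpa using memLp_of_mem_interior_integrableExpSet (lgm_mem ha) 2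

lemma lgm_mgf {a t : ℝ} (ha : 0 < a) (ht : -a < t) :
    mgf id (lgm a) t = Real.Gamma (a + t) / Real.Gamma a := by
  have h : 0 < a + t := by linarith
  rw [mgf, lgm_integral ha]
  have := lgd_exp_integral (a + t) 1 h one_pos
  simp only [one_mul, Real.one_rpow, mul_one] at this
  rw [← this, ← integral_div]
  congr 1; ext w
  simp only [lgd, id]
  rw [div_mul_eq_mul_div, ← Real.exp_add]
  ring_nf

lemma lgm_variance {a : ℝ} (ha : 0 < a) : Var[id; lgm a] = trigamma a := by
  have := lgm_prob ha
  have h := variance_tilted_mul (lgm_mem ha)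
  simp only [zero_mul, tilted_const, measure_univ] at h
  have h' : Var[id; lgm a] = iteratedDeriv 2 (cgf id (lgm a)) 0 := by simpa using h
  rw [h', iteratedDeriv_succ, iteratedDeriv_one]
  have h1 : ∀ t, -a < t → deriv (cgf id (lgm a)) t = digamma (a + t) := by
    intro t ht
    have e : cgf id (lgm a) =ᶠ[nhds t]
        fun t => Real.log (Real.Gamma (a + t)) - Real.log (Real.Gamma a) := by
      filter_upwards [isOpen_Ioi.mem_nhds ht] with s hs
      have hs : -a < s := hs
      rw [cgf, lgm_mgf ha hs, Real.log_div]
      · exact (Real.Gamma_pos_of_pos (by linarith)).ne'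
      · exact (Real.Gamma_pos_of_pos ha).ne'
    have hp : 0 < a + t := by linarith
    rw [e.deriv_eq, deriv_sub_const, deriv_comp_const_add (fun x => Real.log (Real.Gamma x)) a t]
    rw [deriv.log]
    · rfl
    · refine Real.differentiableAt_Gamma fun m => ?_
      have : (0:ℝ) ≤ m := m.cast_nonneg
      linarith
    · exact (Real.Gamma_pos_of_pos hp).ne'
  have e : deriv (cgf id (lgm a)) =ᶠ[nhds 0] fun t => digamma (a + t) := by
    filter_upwards [isOpen_Ioi.mem_nhds (show -a < 0 by linarith)] with t ht using h1 t ht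
  rw [e.deriv_eq, deriv_comp_const_add digamma a 0, add_zero, trigamma]

/-- joint law -/
noncomputable def lgp {ι : Type*} [Fintype ι] (α : ι → ℝ) : Measure (ι → ℝ) :=
  Measure.pi fun i => lgm (α i)

lemma lgp_eq {ι : Type*} [Fintype ι] (α : ι → ℝ) (hα : ∀ i, 0 < α i) :
    lgp α = volume.withDensity fun w => ENNReal.ofReal (∏ i, lgd (α i) (w i)) := by
  have := fun i => lgm_prob (hα i)
  refine Measure.pi_eq fun s hs => ?_
  rw [withDensity_apply _ (MeasurableSet.univ_pi hs), volume_pi, Measure.restrict_pi_pi,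
    ← ofReal_integral_eq_lintegral_ofReal, integral_fintype_prod_eq_prod (fun i => lgd (α i)),
    ENNReal.ofReal_prod_of_nonneg]
  · refine Finset.prod_congr rfl fun i _ => ?_
    rw [lgm, withDensity_apply _ (hs i),
      ← ofReal_integral_eq_lintegral_ofReal (lgd_integrable (hα i)).restrict
      (ae_of_all _ fun w => (lgd_pos (hα i) w).le)]
  · exact fun i _ => integral_nonneg fun w => (lgd_pos (hα i) w).le
  · exact Integrable.fintype_prod fun i => (lgd_integrable (hα i)).restrict
  · exact ae_of_all _ fun w => Finset.prod_nonneg fun i _ => (lgd_pos (hα i) _).le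

lemma lgp_meas {ι : Type*} [Fintype ι] (α : ι → ℝ) :
    Measurable fun w : ι → ℝ => ∏ i, lgd (α i) (w i) :=
  Finset.measurable_prod _ fun i _ => (lgd_measurable _).comp (measurable_pi_apply i)

lemma lgp_integrable {ι : Type*} [Fintype ι] (α : ι → ℝ) (hα : ∀ i, 0 < α i)
    (g : (ι → ℝ) → ℝ) :
    Integrable g (lgp α) ↔ Integrable (fun w => (∏ i, lgd (α i) (w i)) * g w) := by
  have hp : ∀ w : ι → ℝ, 0 ≤ ∏ i, lgd (α i) (w i) :=
    fun w => Finset.prod_nonneg fun i _ => (lgd_pos (hα i) _).le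
  rw [lgp_eq α hα, integrable_withDensity_iff_integrable_smul₀']
  · simp only [ENNReal.toReal_ofReal (hp _), smul_eq_mul]
  · exact (lgp_meas α).ennreal_ofReal.aemeasurable
  · simp

lemma lgp_integral {ι : Type*} [Fintype ι] (α : ι → ℝ) (hα : ∀ i, 0 < α i)
    (g : (ι → ℝ) → ℝ) :
    ∫ w, g w ∂(lgp α) = ∫ w, (∏ i, lgd (α i) (w i)) * g w := by
  have hp : ∀ w : ι → ℝ, 0 ≤ ∏ i, lgd (α i) (w i) :=
    fun w => Finset.prod_nonneg fun i _ => (lgd_pos (hα i) _).le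
  rw [lgp_eq α hα, integral_withDensity_eq_integral_toReal_smul]
  · simp only [ENNReal.toReal_ofReal (hp _), smul_eq_mul]
  · exact (lgp_meas α).ennreal_ofReal
  · simp

lemma lgp_memLp {ι : Type*} [Fintype ι] (α : ι → ℝ) (hα : ∀ i, 0 < α i) (i : ι) :
    MemLp (fun w : ι → ℝ => w i) 2 (lgp α) := by
  have := fun i => lgm_prob (hα i)
  exact (lgm_memLp (hα i)).comp_measurePreserving (measurePreserving_eval (fun i => lgm (α i)) i)

lemma lgp_cov {ι : Type*} [Fintype ι] [DecidableEq ι] (α : ι → ℝ) (hα : ∀ i, 0 < α i) (i j : ι) :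
    cov[fun w : ι → ℝ => w i, fun w : ι → ℝ => w j; lgp α] =
      if i = j then trigamma (α i) else 0 := by
  have := fun i => lgm_prob (hα i)
  split_ifs with h
  · subst h
    rw [covariance_self (measurable_pi_apply i).aemeasurable, ← lgm_variance (hα i)]
    have hm := measurePreserving_eval (fun i => lgm (α i)) i
    rw [← hm.map_eq, variance_map aemeasurable_id hm.measurable.aemeasurable]
    rfl
  · refine IndepFun.covariance_eq_zero ?_ (lgp_memLp α hα i) (lgp_memLp α hα j)
    exact (iIndepFun_pi (X := fun _ => id) (μ := fun i => lgm (α i))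
      fun i => aemeasurable_id).indepFun h

noncomputable def smS {n : ℕ} (y : Fin n → ℝ) : ℝ := 1 + ∑ j, Real.exp (y j)

noncomputable def smT {n : ℕ} (y : Fin n → ℝ) : Fin n → ℝ := fun j => Real.exp (y j) / smS y

lemma smS_pos {n : ℕ} (y : Fin n → ℝ) : 0 < smS y := by
  have : 0 ≤ ∑ j, Real.exp (y j) := Finset.sum_nonneg fun j _ => (Real.exp_pos _).le
  unfold smS; linarith

lemma smT_pos {n : ℕ} (y : Fin n → ℝ) (j : Fin n) : 0 < smT y j :=
  div_pos (Real.exp_pos _) (smS_pos y)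

lemma smT_sum {n : ℕ} (y : Fin n → ℝ) : 1 - ∑ j, smT y j = 1 / smS y := by
  have := (smS_pos y).ne'
  simp only [smT]
  rw [← Finset.sum_div]
  field_simp
  simp [smS]

noncomputable def smM {n : ℕ} (x : Fin n → ℝ) : Matrix (Fin n) (Fin n) ℝ :=
  Matrix.diagonal x * (1 + Matrix.replicateCol Unit (fun _ => (-1 : ℝ)) * Matrix.replicateRow Unit x)

lemma smM_det {n : ℕ} (x : Fin n → ℝ) : (smM x).det = (∏ j, x j) * (1 - ∑ j, x j) := by
  rw [smM, Matrix.det_mul, Matrix.det_diagonal, Matrix.det_one_add_replicateCol_mul_replicateRow]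
  simp [dotProduct, sub_eq_add_neg]

noncomputable def smD {n : ℕ} (y : Fin n → ℝ) : (Fin n → ℝ) →L[ℝ] (Fin n → ℝ) :=
  LinearMap.toContinuousLinearMap (Matrix.toLin' (smM (smT y)))

lemma smD_det {n : ℕ} (y : Fin n → ℝ) :
    |(smD y).det| = (∏ j, smT y j) * (1 / smS y) := by
  have h : (smD y).det = (∏ j, smT y j) * (1 - ∑ j, smT y j) := by
    rw [smD, LinearMap.det_toContinuousLinearMap, LinearMap.det_toLin', smM_det]
  rw [h, smT_sum, abs_of_pos]
  exact mul_pos (Finset.prod_pos fun j _ => smT_pos y j) (one_div_pos.2 (smS_pos y))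

lemma smT_eq {n : ℕ} (y : Fin n → ℝ) (j : Fin n) :
    smT y j = Real.exp (y j - Real.log (smS y)) := by
  rw [Real.exp_sub, Real.exp_log (smS_pos y)]; rfl

lemma smD_apply {n : ℕ} (y v : Fin n → ℝ) (j : Fin n) :
    smD y v j = smT y j * (v j - ∑ i, smT y i * v i) := by
  simp only [smD, LinearMap.coe_toContinuousLinearMap', Matrix.toLin'_apply, smM]
  rw [← Matrix.mulVec_mulVec, Matrix.mulVec_diagonal, Matrix.add_mulVec, Matrix.one_mulVec,
    ← Matrix.mulVec_mulVec]
  simp [Matrix.mulVec, dotProduct, sub_eq_add_neg, Matrix.mul_apply]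

lemma smT_fderiv {n : ℕ} (y : Fin n → ℝ) : HasFDerivAt smT (smD y) y := by
  rw [hasFDerivAt_pi']
  intro j
  have h1 : ∀ i : Fin n, HasFDerivAt (fun y : Fin n → ℝ => y i)
    (ContinuousLinearMap.proj (R := ℝ) (φ := fun _ : Fin n => ℝ) i) y := fun i => hasFDerivAt_apply i y
  have h2 : HasFDerivAt (smS (n := n)) (∑ i, Real.exp (y i) •
      ContinuousLinearMap.proj (R := ℝ) (φ := fun _ : Fin n => ℝ) i) y := by
    unfold smS
    exact (HasFDerivAt.fun_sum fun i _ => (h1 i).exp).const_add 1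
  have h3 := ((h1 j).sub (h2.log (smS_pos y).ne')).exp
  have h4 : (fun y : Fin n → ℝ => smT y j) = fun y => Real.exp (y j - Real.log (smS y)) := by
    ext y; exact smT_eq y j
  rw [h4]
  refine h3.congr_fderiv ?_
  ext v
  simp only [ContinuousLinearMap.comp_apply, ContinuousLinearMap.proj_apply]
  rw [smD_apply, smT_eq]
  simp [Finset.mul_sum, smT, div_eq_inv_mul, mul_assoc, Pi.sub_apply]

lemma smT_inj {n : ℕ} : Function.Injective (smT (n := n)) := by
  intro y z h
  have hs : 1 / smS y = 1 / smS z := by rw [← smT_sum, ← smT_sum, h]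
  have hs : smS y = smS z := by
    simpa using hs
  ext j
  have hj := congrFun h j
  simp only [smT, hs] at hj
  have := (smS_pos z).ne'
  field_simp at hj
  exact Real.exp_injective hj

lemma smT_range {n : ℕ} :
    Set.range (smT (n := n)) = {u | (∀ j, 0 < u j) ∧ ∑ j, u j < 1} := by
  ext u
  constructor
  · rintro ⟨y, rfl⟩
    refine ⟨smT_pos y, ?_⟩
    have := smT_sum y
    have := one_div_pos.2 (smS_pos y)
    linarith
  · rintro ⟨h1, h2⟩
    have hr : 0 < 1 - ∑ j, u j := by linarith
    refine ⟨fun j => Real.log (u j / (1 - ∑ j, u j)), ?_⟩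
    have hS : smS (fun j => Real.log (u j / (1 - ∑ j, u j))) = 1 / (1 - ∑ j, u j) := by
      unfold smS
      simp only [fun j => Real.exp_log (div_pos (h1 j) hr)]
      rw [← Finset.sum_div]
      field_simp
      ring
    ext j
    rw [smT, hS, Real.exp_log (div_pos (h1 j) hr)]
    field_simp

lemma simplex_ae {n : ℕ} (hn : 0 < n) :
    ({u : Fin n → ℝ | (∀ j, 0 ≤ u j) ∧ ∑ j, u j ≤ 1} : Set (Fin n → ℝ)) =ᵐ[volume]
      Set.range (smT (n := n)) := by
  have h1 : ∀ j : Fin n, ∀ᵐ u : Fin n → ℝ, u j ≠ 0 := fun j => by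
    have := Measure.pi_hyperplane (fun _ : Fin n => (volume : Measure ℝ)) j 0
    rw [ae_iff]; simpa [volume_pi] using this
  have h2 : ∀ᵐ u : Fin n → ℝ, ∑ j, u j ≠ 1 := by
    let f : (Fin n → ℝ) →ₗ[ℝ] ℝ := ∑ j, LinearMap.proj j
    have hf : ∀ u, f u = ∑ j, u j := fun u => by simp [f]
    have hne : LinearMap.ker f ≠ ⊤ := by
      intro h
      have : (fun j => if j = ⟨0, hn⟩ then (1 : ℝ) else 0) ∈ LinearMap.ker f := h ▸ Submodule.mem_top
      rw [LinearMap.mem_ker, hf] at this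
      simp at this
    have h0 := Measure.addHaar_submodule (volume : Measure (Fin n → ℝ)) _ hne
    let c : Fin n → ℝ := fun j => if j = ⟨0, hn⟩ then (-1 : ℝ) else 0
    have h3 := measure_preimage_add_right (volume : Measure (Fin n → ℝ)) c (LinearMap.ker f)
    rw [h0] at h3
    rw [ae_iff]
    refine measure_mono_null ?_ h3
    intro u hu
    simp only [not_not] at hu
    have hu : ∑ j, u j = 1 := hu
    simp only [Set.mem_preimage, SetLike.mem_coe, LinearMap.mem_ker, hf]
    simp [c, Finset.sum_add_distrib, hu]
  rw [smT_range]
  filter_upwards [ae_all_iff.2 h1, h2] with u hu1 hu2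
  refine propext ⟨?_, ?_⟩
  · rintro ⟨a, b⟩
    exact ⟨fun j => lt_of_le_of_ne (a j) (hu1 j).symm, lt_of_le_of_ne b hu2⟩
  · rintro ⟨a, b⟩
    exact ⟨fun j => (a j).le, b.le⟩

noncomputable def smX {n : ℕ} (y : Fin n → ℝ) : Fin (n + 1) → ℝ :=
  fun i => Real.exp (Fin.snoc (α := fun _ => ℝ) y 0 i - Real.log (smS y))

lemma fillMap_smT {n : ℕ} (y : Fin n → ℝ) : fillMap (n + 1) (smT y) = smX y := by
  ext i
  unfold fillMap smX
  refine Fin.lastCases ?_ (fun j => ?_) i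
  · have : ¬ ((Fin.last n : Fin (n+1)) : ℕ) < n + 1 - 1 := by simp
    rw [dif_neg this, Fin.snoc_last, Real.exp_sub, Real.exp_zero, Real.exp_log (smS_pos y)]
    exact smT_sum y
  · have : ((Fin.castSucc j : Fin (n+1)) : ℕ) < n + 1 - 1 := by simp
    rw [dif_pos this, Fin.snoc_castSucc]
    exact smT_eq y j

lemma fillMap_meas (n : ℕ) : Measurable (fillMap (n + 1)) := by
  refine measurable_pi_lambda _ fun i => ?_
  unfold fillMap
  split_ifs <;> fun_prop

lemma simplex_integral {n : ℕ} (hn : 0 < n) (h : (Fin (n + 1) → ℝ) → ℝ) (hm : Measurable h) :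
    ∫ x, h x ∂(simplexMeasure (n + 1)) = ∫ y : Fin n → ℝ, (∏ i, smX y i) * h (smX y) := by
  rw [simplexMeasure, integral_map (fillMap_meas n).aemeasurable hm.aestronglyMeasurable]
  have e : ∀ g : (Fin n → ℝ) → ℝ,
      ∫ u in {u : Fin n → ℝ | (∀ j, 0 ≤ u j) ∧ ∑ j, u j ≤ 1}, g u =
      ∫ y : Fin n → ℝ, |(smD y).det| • g (smT y) := by
    intro g
    rw [setIntegral_congr_set (simplex_ae hn), ← Set.image_univ,
      integral_image_eq_integral_abs_det_fderiv_smul volume MeasurableSet.univ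
        (fun y _ => (smT_fderiv y).hasFDerivWithinAt) smT_inj.injOn, Measure.restrict_univ]
  refine (e _).trans ?_
  congr 1
  ext y
  rw [fillMap_smT, smD_det, smul_eq_mul]
  congr 1
  rw [Fin.prod_univ_castSucc]
  simp only [smX, Fin.snoc_castSucc, Fin.snoc_last, smT_eq]
  rw [zero_sub, Real.exp_neg, Real.exp_log (smS_pos y), one_div]

lemma dens_eq {n : ℕ} (τ : ℝ) (hτ : 0 < τ) (α β : Fin (n + 1) → ℝ) (hα : ∀ i, 0 < α i)
    (hβ : ∀ i, 0 < β i) (y : Fin n → ℝ) :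
    (∏ i, smX y i) * isDensity (n + 1) α β τ (smX y) =
      τ ^ n * ∫ t, ∏ i, lgd (α i)
        (Real.log (β i) - τ * Fin.snoc (α := fun _ => ℝ) y 0 i + t) := by
  set L := Real.log (smS y) with hL
  set e : Fin (n + 1) → ℝ := Fin.snoc (α := fun _ => ℝ) y 0 with he
  set ζ : Fin (n + 1) → ℝ := fun i => Real.log (β i) - τ * e i with hζ
  set S := ∑ i, Real.exp (ζ i) with hS
  set A := ∑ i, α i with hA
  have hSp : 0 < S := Finset.sum_pos (fun i _ => Real.exp_pos _) Finset.univ_nonempty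
  have hAp : 0 < A := Finset.sum_pos (fun i _ => hα i) Finset.univ_nonempty
  have hx : ∀ i, smX y i = Real.exp (e i - L) := fun i => rfl
  have hG : ∀ i, Real.Gamma (α i) ≠ 0 := fun i => (Real.Gamma_pos_of_pos (hα i)).ne'
  -- right side
  have hR : ∫ t, ∏ i, lgd (α i) (ζ i + t) =
      (Real.Gamma A * S ^ (-A)) * (Real.exp (∑ i, α i * ζ i) / ∏ i, Real.Gamma (α i)) := by
    rw [← lgd_exp_integral A S hAp hSp, ← integral_mul_const]
    congr 1
    ext t
    simp only [lgd]
    rw [Finset.prod_div_distrib, ← Real.exp_sum, ← mul_div_assoc, ← Real.exp_add]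
    congr 2
    rw [Finset.sum_sub_distrib, hA, hS, Finset.sum_mul, Finset.sum_mul]
    simp only [mul_add, Real.exp_add, Finset.sum_add_distrib]
    ring
  have h1 : ∑ j, β j / smX y j ^ τ = S * Real.exp (τ * L) := by
    rw [hS, Finset.sum_mul]
    refine Finset.sum_congr rfl fun j _ => ?_
    rw [hx, ← Real.exp_mul]
    conv_lhs => rw [← Real.exp_log (hβ j)]
    rw [← Real.exp_sub, ← Real.exp_add]
    congr 1
    simp only [hζ]; ring
  have h2 : ∀ i, smX y i * (β i ^ (α i) / (Real.Gamma (α i) * smX y i ^ (τ * α i + 1))) =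
      Real.exp (α i * ζ i + τ * L * α i) / Real.Gamma (α i) := by
    intro i
    rw [hx, ← Real.exp_mul, Real.rpow_def_of_pos (hβ i)]
    have : Real.exp (α i * ζ i + τ * L * α i) = Real.exp (e i - L) * Real.exp (Real.log (β i) * α i)
        / Real.exp ((e i - L) * (τ * α i + 1)) := by
      rw [← Real.exp_add, ← Real.exp_sub]
      congr 1
      simp only [hζ]; ring
    rw [this]
    have := hG i
    field_simp
  have h3 : (S * Real.exp (τ * L)) ^ (-A) = S ^ (-A) * Real.exp (-(τ * L * A)) := by
    rw [Real.mul_rpow hSp.le (Real.exp_pos _).le, ← Real.exp_mul]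
    ring_nf
  rw [hR, isDensity, h1, h3, ← hA, Nat.add_sub_cancel]
  calc _ = τ ^ n * Real.Gamma A * (S ^ (-A) * Real.exp (-(τ * L * A))) *
        ∏ i, (smX y i * (β i ^ (α i) / (Real.Gamma (α i) * smX y i ^ (τ * α i + 1)))) := by
          rw [Finset.prod_mul_distrib]; ring
    _ = τ ^ n * Real.Gamma A * (S ^ (-A) * Real.exp (-(τ * L * A))) *
        (Real.exp (∑ i, α i * ζ i) * Real.exp (τ * L * A) / ∏ i, Real.Gamma (α i)) := by
          rw [Finset.prod_congr rfl fun i _ => h2 i, Finset.prod_div_distrib, ← Real.exp_sum,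
            Finset.sum_add_distrib, Real.exp_add, ← Finset.mul_sum]
    _ = _ := by
          rw [Real.exp_neg]
          have := (Real.exp_pos (τ * L * A)).ne'
          field_simp

/-- the shear -/
lemma shear_mp {n : ℕ} (b : Fin (n + 1) → ℝ) :
    MeasurePreserving (fun p : ℝ × (Fin n → ℝ) =>
      (fun i => b i + Fin.snoc (α := fun _ => ℝ) p.2 0 i + p.1 : Fin (n + 1) → ℝ))
      (volume.prod volume) volume := by
  have h1 : MeasurePreserving (fun p : ℝ × (Fin n → ℝ) =>
      (p.1 + b (Fin.last n), p.2 + fun j => b (Fin.castSucc j) + p.1))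
      (volume.prod volume) (volume.prod volume) := by
    refine MeasurePreserving.skew_product (f := fun t : ℝ => t + b (Fin.last n))
      (g := fun (t : ℝ) (v : Fin n → ℝ) => v + fun j => b (Fin.castSucc j) + t)
      (measurePreserving_add_right volume _) ?_ ?_
    · unfold Function.uncurry
      fun_prop
    · exact ae_of_all _ fun t => (measurePreserving_add_right volume _).map_eq
  have h2 := (volume_preserving_piFinSuccAbove (fun _ : Fin (n + 1) => ℝ) (Fin.last n)).symm
  have h3 := h2.comp h1
  have hf : (fun p : ℝ × (Fin n → ℝ) =>
      (fun i => b i + Fin.snoc (α := fun _ => ℝ) p.2 0 i + p.1 : Fin (n + 1) → ℝ)) =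
      (MeasurableEquiv.piFinSuccAbove (fun _ : Fin (n + 1) => ℝ) (Fin.last n)).symm ∘
        fun p : ℝ × (Fin n → ℝ) =>
          (p.1 + b (Fin.last n), p.2 + fun j => b (Fin.castSucc j) + p.1) := by
    funext p i
    refine Fin.lastCases ?_ (fun j => ?_) i
    · simp [MeasurableEquiv.piFinSuccAbove_symm_apply, Fin.insertNthEquiv]
      ring
    · simp [MeasurableEquiv.piFinSuccAbove_symm_apply, Fin.insertNthEquiv]
      ring
  rw [hf]
  exact h3

lemma isDensity_meas (K : ℕ) (α β : Fin K → ℝ) (τ : ℝ) : Measurable (isDensity K α β τ) := by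
  unfold isDensity
  fun_prop

lemma key {n : ℕ} (hn : 0 < n) (τ : ℝ) (hτ : 0 < τ) (α β : Fin (n + 1) → ℝ) (hα : ∀ i, 0 < α i)
    (hβ : ∀ i, 0 < β i) (φ ψ : (Fin (n + 1) → ℝ) → ℝ) (hφm : Measurable φ)
    (hψ : ∀ w t, ψ (fun i => w i + t) = ψ w) (hint : Integrable ψ (lgp α))
    (hφ : ∀ y : Fin n → ℝ, φ (smX y) =
      ψ (fun i => Real.log (β i) - τ * Fin.snoc (α := fun _ => ℝ) y 0 i)) :
    ∫ x, φ x * isDensity (n + 1) α β τ x ∂(simplexMeasure (n + 1)) = ∫ w, ψ w ∂(lgp α) := by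
  rw [simplex_integral hn (fun x => φ x * isDensity (n + 1) α β τ x) (hφm.mul (isDensity_meas _ _ _ _))]
  set G : (Fin (n + 1) → ℝ) → ℝ := fun w => (∏ i, lgd (α i) (w i)) * ψ w with hG
  have hGi : Integrable G := (lgp_integrable α hα ψ).1 hint
  set F : (Fin n → ℝ) → ℝ := fun v => ∫ t, G (fun i => Real.log (β i) +
    Fin.snoc (α := fun _ => ℝ) v 0 i + t) with hF
  have h1 : ∀ y : Fin n → ℝ, (∏ i, smX y i) * (φ (smX y) * isDensity (n + 1) α β τ (smX y)) =
      τ ^ n * F ((-τ) • y) := by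
    intro y
    have e : ∀ i, Fin.snoc (α := fun _ => ℝ) ((-τ) • y) 0 i =
        - (τ * Fin.snoc (α := fun _ => ℝ) y 0 i) := by
      intro i
      refine Fin.lastCases ?_ (fun j => ?_) i <;> simp
    rw [mul_left_comm, dens_eq τ hτ α β hα hβ, hφ, hF, mul_left_comm, ← integral_const_mul]
    congr 2
    ext t
    simp only [hG, e, ← sub_eq_add_neg]
    rw [hψ (fun i => Real.log (β i) - τ * Fin.snoc (α := fun _ => ℝ) y 0 i) t, mul_comm]
  simp only [h1]
  rw [integral_const_mul, Measure.integral_comp_smul, Module.finrank_fin_fun, smul_eq_mul,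
    abs_inv, abs_pow, abs_neg, abs_of_pos hτ, ← mul_assoc,
    mul_inv_cancel₀ (pow_pos hτ n).ne', one_mul, lgp_integral α hα]
  have hs := shear_mp (fun i => Real.log (β i))
  have hGc := hs.integrable_comp_of_integrable hGi
  have := integral_prod_symm _ hGc
  simp only [Function.comp_def] at this
  rw [hF, ← this, ← hs.map_eq, integral_map hs.measurable.aemeasurable]
  rw [hs.map_eq]; exact hGi.aestronglyMeasurable

/-- Log-ratio covariances of the inverse Schlömilch distribution:
`Cov[log(X_i/X_k), log(X_j/X_l)] = (1/τ²)[(δ_ij − δ_il)ψ'(α_i) − (δ_kj − δ_kl)ψ'(α_k)]`. -/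
theorem is_log_ratio_covariance
    (K : ℕ) (hK : 2 ≤ K) (τ : ℝ) (hτ : 0 < τ)
    (α β : Fin K → ℝ) (hα : ∀ i, 0 < α i) (hβ : ∀ i, 0 < β i) (i j k l : Fin K) :
    (∫ x, Real.log (x i / x k) * Real.log (x j / x l) * isDensity K α β τ x
        ∂(simplexMeasure K))
      - (∫ x, Real.log (x i / x k) * isDensity K α β τ x ∂(simplexMeasure K)) *
        (∫ x, Real.log (x j / x l) * isDensity K α β τ x ∂(simplexMeasure K))
      = (1 / τ ^ 2) *
          ((kd i j - kd i l) * trigamma (α i) - (kd k j - kd k l) * trigamma (α k)) := by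
  obtain ⟨n, rfl⟩ : ∃ n, K = n + 1 := ⟨K - 1, by omega⟩
  have hn : 0 < n := by omega
  have hp : IsProbabilityMeasure (lgp α) := by
    have := fun i => lgm_prob (hα i)
    unfold lgp; infer_instance
  let R : Fin (n + 1) → Fin (n + 1) → (Fin (n + 1) → ℝ) → ℝ := fun i k w =>
    (-1 / τ) * (w i - w k) + (Real.log (β i) - Real.log (β k)) / τ
  have hD : ∀ i k, MemLp (fun w : Fin (n + 1) → ℝ => w i - w k) 2 (lgp α) := fun i k =>
    (lgp_memLp α hα i).sub (lgp_memLp α hα k)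
  have hR : ∀ i k, MemLp (R i k) 2 (lgp α) := fun i k =>
    ((hD i k).const_mul _).add (memLp_const _)
  have hRi : ∀ i k w t, R i k (fun i => w i + t) = R i k w := by
    intro i k w t; simp only [R]; ring
  have hlog : ∀ (i k : Fin (n + 1)) (y : Fin n → ℝ), Real.log (smX y i / smX y k) =
      R i k (fun i => Real.log (β i) - τ * Fin.snoc (α := fun _ => ℝ) y 0 i) := by
    intro i k y
    simp only [smX, R]
    rw [← Real.exp_sub, Real.log_exp]
    field_simp
    ring
  rw [key hn τ hτ α β hα hβ (fun x => Real.log (x i / x k)) (R i k) (by fun_prop) (hRi i k)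
      ((hR i k).integrable (by norm_num)) (hlog i k),
    key hn τ hτ α β hα hβ (fun x => Real.log (x j / x l)) (R j l) (by fun_prop) (hRi j l)
      ((hR j l).integrable (by norm_num)) (hlog j l),
    key hn τ hτ α β hα hβ (fun x => Real.log (x i / x k) * Real.log (x j / x l))
      (R i k * R j l) (by fun_prop) (fun w t => by simp only [Pi.mul_apply, hRi])
      ((hR i k).integrable_mul (hR j l)) (fun y => by simp only [Pi.mul_apply, hlog])]
  rw [← ProbabilityTheory.covariance_eq_sub (hR i k) (hR j l)]
  have hc := ProbabilityTheory.covariance_fun_sub_fun_sub (lgp_memLp α hα i) (lgp_memLp α hα k)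
    (lgp_memLp α hα j) (lgp_memLp α hα l)
  simp only [R]
  rw [ProbabilityTheory.covariance_add_const_left (((hD i k).const_mul _).integrable (by norm_num)),
    ProbabilityTheory.covariance_add_const_right (((hD j l).const_mul _).integrable (by norm_num)),
    ProbabilityTheory.covariance_const_mul_left, ProbabilityTheory.covariance_const_mul_right, hc]
  simp only [lgp_cov α hα, kd]
  split_ifs <;> ring
end
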